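/- Let M be a σ-compact metric space with a good covering 𝒰 = {U_j}_{j∈J} (J countable), and fix L > 6. Then there exists a locally Lipschitz strong deformation retraction of the mapping cylinder M(p) onto D(𝒰) × {0} = {(θ,[x,0]) : (θ,x) ∈ D(𝒰)}, i.e. a locally Lipschitz map Φ : M(p) × [0,1] → M(p) with Φ(z,0) = z and Φ(z,1) ∈ D(𝒰) × {0} for all z ∈ M(p), and Φ(a,t) = a for all a ∈ D(𝒰) × {0} and t ∈ [0,1]. -/

import Mathlib

open Metric Set

/-- The cone distance on `M × [0,L]` (representatives of the cone
`K(M) = M × [0,L] / (M × {L})`). Two representatives are identified in the cone iff their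
cone distance is `0`. -/
noncomputable def coneDist {M : Type*} [PseudoMetricSpace M] (L : ℝ) (c c' : M × ℝ) : ℝ :=
  Real.sqrt ((L - c.2) ^ 2 + (L - c'.2) ^ 2 -
    2 * (L - c.2) * (L - c'.2) * Real.cos (min Real.pi (dist c.1 c'.1)))

/-- A subset `V` of a metric space admits a *Lipschitz strong deformation retraction to a
point*. -/
def IsLipSDRToPoint {X : Type*} [MetricSpace X] (V : Set X) : Prop :=
  ∃ (p : V) (F : V × unitInterval → V) (K : NNReal),
    LipschitzWith K F ∧ (∀ x, F (x, 0) = x) ∧ (∀ x, F (x, 1) = p) ∧ (∀ t, F (p, t) = p)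

/-- A locally finite open covering is *good*. -/
def IsGoodCovering {X : Type*} [MetricSpace X] {J : Type*} (U : J → Set X) : Prop :=
  (∀ j, IsOpen (U j)) ∧ (⋃ j, U j) = univ ∧ LocallyFinite U ∧
    (∀ j, IsCompact (closure (U j))) ∧
    ∀ s : Finset J, s.Nonempty → (⋂ j ∈ s, U j).Nonempty → IsLipSDRToPoint (⋂ j ∈ s, U j)

/-- The geometric realization of the nerve of a covering with countable index set,
realized inside `ℓ^∞(J)` (so that the induced metric is the sup metric). -/
noncomputable def NerveSetInf {M : Type*} [MetricSpace M] {J : Type*} (U : J → Set M) :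
    Set (lp (fun _ : J => ℝ) ⊤) :=
  {θ | (∀ j, θ j ∈ Icc (0:ℝ) 1) ∧ (Function.support fun j => θ j).Finite ∧
    (∑ᶠ j, θ j) = 1 ∧ (⋂ j ∈ Function.support fun j => θ j, U j).Nonempty}

/-- The distance of the mapping cylinder `M(p) ⊆ |𝒩_𝒰| × K(M)`:
`d((θ,c),(θ',c'))² = d(θ,θ')² + d_K(c,c')²`, on representatives `(θ, x, t)`. -/
noncomputable def cylDistInf {M : Type*} [PseudoMetricSpace M] {J : Type*} (L : ℝ)
    (z w : (lp (fun _ : J => ℝ) ⊤) × M × ℝ) : ℝ :=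
  Real.sqrt (dist z.1 w.1 ^ 2 + coneDist L z.2 w.2 ^ 2)

/-- `(θ, x, t)` represents a point of the mapping cylinder
`M(p) = ⋃_σ σ × K(U_σ) ⊆ |𝒩_𝒰| × K(M)`. -/
def InCylInf {M : Type*} [MetricSpace M] {J : Type*} (U : J → Set M) (L : ℝ)
    (z : (lp (fun _ : J => ℝ) ⊤) × M × ℝ) : Prop :=
  z.1 ∈ NerveSetInf U ∧ z.2.2 ∈ Icc 0 L ∧
    ∃ s : Finset J, (∀ j, z.1 j ≠ 0 → j ∈ s) ∧ (⋂ j ∈ s, U j).Nonempty ∧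
      (z.2.2 = L ∨ z.2.1 ∈ ⋂ j ∈ s, U j)

/-- `(θ, x, t)` represents a point of `D(𝒰) × {0} ⊆ M(p)`. -/
def InDZeroInf {M : Type*} [MetricSpace M] {J : Type*} (U : J → Set M)
    (z : (lp (fun _ : J => ℝ) ⊤) × M × ℝ) : Prop :=
  z.1 ∈ NerveSetInf U ∧ z.2.2 = 0 ∧
    z.2.1 ∈ ⋂ j ∈ Function.support fun j => z.1 j, U j

/-! The simplices of the nerve are the sets `τ` of vertices; near the barycentre of `τ` the
coordinates in `τ` dominate all the others, and the sets `τ` that dominate at a given `θ` form a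
chain. A point `(θ, x, t)` is retracted in three stages. First `θ` is pushed into the faces in which
it is deep. Then `x` is contracted successively in the sets `⋂ j ∈ τ, U j` for these faces, smaller
intersections first: this does not leave the sets `U j` that belong to the pushed weight, and only
finitely many contractions matter near a given point. Last, `t` moves linearly to `0`. The first two
stages are switched off at height `0`. Since every point of the nerve is deep in some face, at large
height the contraction has removed all dependence on `x` before `t` leaves the apex. This makes the
homotopy Lipschitz there, although the cone distance does not control `x` at the apex. -/

section

open Filter
open scoped Topology NNReal

/-- `f` is Lipschitz on some neighbourhood of the point `x`; Mathlib only has the versions of this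
notion for all points of the space or of a set. -/
def LocallyLipschitzAt {X Y : Type*} [PseudoMetricSpace X] [PseudoMetricSpace Y]
    (f : X → Y) (x : X) : Prop :=
  ∃ K : ℝ≥0, ∃ s ∈ 𝓝 x, LipschitzOnWith K f s

namespace LocallyLipschitzAt

section Metric

variable {X Y Z : Type*} [PseudoMetricSpace X] [PseudoMetricSpace Y] [PseudoMetricSpace Z]
  {f : X → Y} {x : X}

theorem of_lipschitzWith {K : ℝ≥0} (hf : LipschitzWith K f) (x : X) : LocallyLipschitzAt f x :=
  ⟨K, univ, univ_mem, hf.lipschitzOnWith⟩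

theorem const (c : Y) (x : X) : LocallyLipschitzAt (fun _ : X ↦ c) x :=
  of_lipschitzWith (LipschitzWith.const c) x

theorem continuousAt (hf : LocallyLipschitzAt f x) : ContinuousAt f x := by
  obtain ⟨K, s, hs, hK⟩ := hf
  exact hK.continuousOn.continuousAt hs

theorem comp {g : Y → Z} (hg : LocallyLipschitzAt g (f x)) (hf : LocallyLipschitzAt f x) :
    LocallyLipschitzAt (fun y ↦ g (f y)) x := by
  have hcont := hf.continuousAt
  obtain ⟨K, s, hs, hK⟩ := hf
  obtain ⟨K', s', hs', hK'⟩ := hg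
  exact ⟨K' * K, s ∩ f ⁻¹' s', inter_mem hs (hcont hs'),
    hK'.comp (hK.mono inter_subset_left) fun _ hy ↦ hy.2⟩

theorem prodMk {g : X → Z} (hf : LocallyLipschitzAt f x) (hg : LocallyLipschitzAt g x) :
    LocallyLipschitzAt (fun y ↦ (f y, g y)) x := by
  obtain ⟨K, s, hs, hK⟩ := hf
  obtain ⟨K', s', hs', hK'⟩ := hg
  exact ⟨max K K', s ∩ s', inter_mem hs hs',
    (hK.mono inter_subset_left).prodMk (hK'.mono inter_subset_right)⟩

theorem congr {g : X → Y} (hf : LocallyLipschitzAt f x) (hgf : g =ᶠ[𝓝 x] f) :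
    LocallyLipschitzAt g x := by
  obtain ⟨K, s, hs, hK⟩ := hf
  refine ⟨K, s ∩ {y | g y = f y}, inter_mem hs hgf, fun a ha b hb ↦ ?_⟩
  rw [ha.2, hb.2]
  exact hK ha.1 hb.1

end Metric

section Normed

variable {X : Type*} [PseudoMetricSpace X] {x : X} {E : Type*} [NormedAddCommGroup E]
  [NormedSpace ℝ E]

theorem of_contDiffAt {F : Type*} [NormedAddCommGroup F] [NormedSpace ℝ F] {g : E → F} {v : E}
    (hg : ContDiffAt ℝ 1 g v) : LocallyLipschitzAt g v :=
  hg.exists_lipschitzOnWith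

theorem add {f g : X → E} (hf : LocallyLipschitzAt f x) (hg : LocallyLipschitzAt g x) :
    LocallyLipschitzAt (fun y ↦ f y + g y) x :=
  (of_contDiffAt (g := fun p : E × E ↦ p.1 + p.2) (by fun_prop)).comp (hf.prodMk hg)

theorem sub {f g : X → E} (hf : LocallyLipschitzAt f x) (hg : LocallyLipschitzAt g x) :
    LocallyLipschitzAt (fun y ↦ f y - g y) x :=
  (of_contDiffAt (g := fun p : E × E ↦ p.1 - p.2) (by fun_prop)).comp (hf.prodMk hg)

theorem smul {f : X → ℝ} {g : X → E} (hf : LocallyLipschitzAt f x)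
    (hg : LocallyLipschitzAt g x) : LocallyLipschitzAt (fun y ↦ f y • g y) x :=
  (of_contDiffAt (g := fun p : ℝ × E ↦ p.1 • p.2) (by fun_prop)).comp (hf.prodMk hg)

theorem mul {f g : X → ℝ} (hf : LocallyLipschitzAt f x) (hg : LocallyLipschitzAt g x) :
    LocallyLipschitzAt (fun y ↦ f y * g y) x :=
  hf.smul hg

theorem const_mul {f : X → ℝ} (c : ℝ) (hf : LocallyLipschitzAt f x) :
    LocallyLipschitzAt (fun y ↦ c * f y) x :=
  (const c x).mul hf

theorem div {f g : X → ℝ} (hf : LocallyLipschitzAt f x) (hg : LocallyLipschitzAt g x)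
    (hx : g x ≠ 0) : LocallyLipschitzAt (fun y ↦ f y / g y) x :=
  (of_contDiffAt (g := fun p : ℝ × ℝ ↦ p.1 / p.2)
    (contDiffAt_fst.div contDiffAt_snd hx)).comp (hf.prodMk hg)

theorem sum {ι : Type*} (s : Finset ι) {f : ι → X → E}
    (hf : ∀ i, LocallyLipschitzAt (f i) x) : LocallyLipschitzAt (fun y ↦ ∑ i ∈ s, f i y) x := by
  classical
  induction s using Finset.induction_on with
  | empty => simpa using const (0 : E) x
  | insert i s hi ih => simpa only [Finset.sum_insert hi] using (hf i).add ih

theorem prod {ι : Type*} (s : Finset ι) {f : ι → X → ℝ}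
    (hf : ∀ i, LocallyLipschitzAt (f i) x) : LocallyLipschitzAt (fun y ↦ ∏ i ∈ s, f i y) x := by
  classical
  induction s using Finset.induction_on with
  | empty => simpa using const (1 : ℝ) x
  | insert i s hi ih => simpa only [Finset.prod_insert hi] using (hf i).mul ih

end Normed

end LocallyLipschitzAt

theorem locallyLipschitzAt_iff_isBigO {X Y : Type*} [PseudoMetricSpace X] [PseudoMetricSpace Y]
    {f : X → Y} {x : X} :
    LocallyLipschitzAt f x ↔
      (fun p : X × X ↦ dist (f p.1) (f p.2)) =O[𝓝 (x, x)] fun p ↦ dist p.1 p.2 := by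
  simp only [Asymptotics.isBigO_iff, Real.norm_of_nonneg dist_nonneg, nhds_prod_eq]
  constructor
  · rintro ⟨K, s, hs, hK⟩
    refine ⟨K, ?_⟩
    filter_upwards [prod_mem_prod hs hs] with p hp
    exact hK.dist_le_mul _ hp.1 _ hp.2
  · rintro ⟨K, hK⟩
    obtain ⟨s, hs, hK⟩ := eventually_prod_self_iff
      (r := fun a b ↦ dist (f a) (f b) ≤ K * dist a b).1 hK
    exact ⟨K.toNNReal, s, hs, LipschitzOnWith.of_dist_le_mul fun a ha b hb ↦
      (hK a ha b hb).trans (by gcongr; exact Real.le_coe_toNNReal K)⟩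

/-- The piecewise linear cut-off equal to `0` on `(-∞, 0]`, to `1` on `[1, ∞)` and to the identity
in between. -/
noncomputable def ramp (r : ℝ) : ℝ := projIcc 0 1 zero_le_one r

theorem ramp_mem_Icc (r : ℝ) : ramp r ∈ Icc (0 : ℝ) 1 := (projIcc 0 1 zero_le_one r).2

theorem ramp_of_nonpos {r : ℝ} (hr : r ≤ 0) : ramp r = 0 := by
  rw [ramp, projIcc_of_le_left _ hr]

theorem ramp_of_one_le {r : ℝ} (hr : 1 ≤ r) : ramp r = 1 := by
  rw [ramp, projIcc_of_right_le _ hr]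

theorem pos_of_ramp_ne_zero {r : ℝ} (hr : ramp r ≠ 0) : 0 < r :=
  not_le.1 fun h ↦ hr (ramp_of_nonpos h)

theorem LocallyLipschitzAt.ramp {X : Type*} [PseudoMetricSpace X] {f : X → ℝ} {x : X}
    (hf : LocallyLipschitzAt f x) : LocallyLipschitzAt (fun y ↦ ramp (f y)) x :=
  (of_lipschitzWith (LipschitzWith.subtype_val _ |>.comp (LipschitzWith.projIcc zero_le_one))
    (f x)).comp hf

/-- `V` admits a Lipschitz homotopy inside `V` from the identity to a constant map. -/
def IsLipContractible {M : Type*} [PseudoMetricSpace M] (V : Set M) : Prop :=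
  ∃ (p : V) (F : V × unitInterval → V) (K : ℝ≥0),
    LipschitzWith K F ∧ (∀ x, F (x, 0) = x) ∧ ∀ x, F (x, 1) = p

theorem IsLipSDRToPoint.isLipContractible {M : Type*} [MetricSpace M] {V : Set M}
    (hV : IsLipSDRToPoint V) : IsLipContractible V := by
  obtain ⟨p, F, K, hF, hF0, hF1, -⟩ := hV
  exact ⟨p, F, K, hF, hF0, hF1⟩

/-- A choice of Lipschitz contractions `x ↦ map τ x a`, `a ∈ [0, 1]`, of the finite intersections
`⋂ j ∈ τ, U j`, extended to total functions of `τ`, `x` and `a`. -/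
structure ContractionSystem {M J : Type*} [PseudoMetricSpace M] (U : J → Set M) where
  map : Finset J → M → ℝ → M
  const : Finset J → ℝ
  map_mem {τ : Finset J} (hτ : τ.Nonempty) {x : M} (hx : x ∈ ⋂ j ∈ τ, U j) (a : ℝ) :
    map τ x a ∈ ⋂ j ∈ τ, U j
  map_zero {τ : Finset J} (hτ : τ.Nonempty) {x : M} (hx : x ∈ ⋂ j ∈ τ, U j) : map τ x 0 = x
  map_one {τ : Finset J} (hτ : τ.Nonempty) {x y : M} (hx : x ∈ ⋂ j ∈ τ, U j)
    (hy : y ∈ ⋂ j ∈ τ, U j) : map τ x 1 = map τ y 1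
  dist_map_le {τ : Finset J} (hτ : τ.Nonempty) {x y : M} (hx : x ∈ ⋂ j ∈ τ, U j)
    (hy : y ∈ ⋂ j ∈ τ, U j) (a b : ℝ) :
    dist (map τ x a) (map τ y b) ≤ const τ * (dist x y + |a - b|)

theorem IsLipContractible.exists_extension {M : Type*} [PseudoMetricSpace M] {V : Set M}
    (hV : V.Nonempty → IsLipContractible V) :
    ∃ (F : M → ℝ → M) (K : ℝ), (∀ x ∈ V, ∀ a, F x a ∈ V) ∧ (∀ x ∈ V, F x 0 = x) ∧
      (∀ x ∈ V, ∀ y ∈ V, F x 1 = F y 1) ∧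
      ∀ x ∈ V, ∀ y ∈ V, ∀ a b, dist (F x a) (F y b) ≤ K * (dist x y + |a - b|) := by
  classical
  rcases V.eq_empty_or_nonempty with rfl | hne
  · exact ⟨fun x _ ↦ x, 0, by simp⟩
  obtain ⟨p, F, K, hF, hF0, hF1⟩ := hV hne
  let clamp : ℝ → unitInterval := projIcc 0 1 zero_le_one
  have hclamp (a b : ℝ) : dist (clamp a) (clamp b) ≤ |a - b| := by
    simpa [Real.dist_eq] using (LipschitzWith.projIcc zero_le_one).dist_le_mul a b
  refine ⟨fun x a ↦ if hx : x ∈ V then F (⟨x, hx⟩, clamp a) else x, K,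
    fun x hx a ↦ ?_, fun x hx ↦ ?_, fun x hx y hy ↦ ?_, fun x hx y hy a b ↦ ?_⟩
  · simp only [hx, dite_true, Subtype.coe_prop]
  · simp only [hx, dite_true, clamp, projIcc_left]
    exact congrArg Subtype.val (hF0 ⟨x, hx⟩)
  · simp only [hx, hy, dite_true, clamp, projIcc_right]
    exact congrArg Subtype.val ((hF1 ⟨x, hx⟩).trans (hF1 ⟨y, hy⟩).symm)
  · simp only [hx, hy, dite_true]
    refine (hF.dist_le_mul (⟨x, hx⟩, clamp a) (⟨y, hy⟩, clamp b)).trans ?_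
    gcongr
    exact (max_le_add_of_nonneg dist_nonneg dist_nonneg).trans
      (add_le_add_right (hclamp a b) (dist x y))

theorem ContractionSystem.nonempty_of_isLipContractible {M J : Type*} [PseudoMetricSpace M]
    {U : J → Set M} (hU : ∀ s : Finset J, s.Nonempty → (⋂ j ∈ s, U j).Nonempty →
      IsLipContractible (⋂ j ∈ s, U j)) :
    Nonempty (ContractionSystem U) := by
  have hext (τ : Finset J) : ∃ (F : M → ℝ → M) (K : ℝ), τ.Nonempty → _ :=
    if hτ : τ.Nonempty then
      let ⟨F, K, h⟩ := IsLipContractible.exists_extension (hU τ hτ)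
      ⟨F, K, fun _ ↦ h⟩
    else ⟨fun x _ ↦ x, 0, fun h ↦ (hτ h).elim⟩
  choose F K hF using hext
  exact ⟨{
    map := F
    const := K
    map_mem := fun hτ _ hx a ↦ (hF _ hτ).1 _ hx a
    map_zero := fun hτ _ hx ↦ (hF _ hτ).2.1 _ hx
    map_one := fun hτ _ _ hx hy ↦ (hF _ hτ).2.2.1 _ hx _ hy
    dist_map_le := fun hτ _ _ hx hy a b ↦ (hF _ hτ).2.2.2 _ hx _ hy a b }⟩

theorem subset_of_card_le_of_isChain {J : Type*} {𝒞 : Set (Finset J)}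
    (h𝒞 : IsChain (· ⊆ ·) 𝒞) {σ τ : Finset J} (hσ : σ ∈ 𝒞) (hτ : τ ∈ 𝒞)
    (hcard : σ.card ≤ τ.card) : σ ⊆ τ :=
  (h𝒞.total hσ hτ).elim id fun h ↦ (Finset.eq_of_subset_of_card_le h hcard).ge

namespace ContractionSystem

variable {M J : Type*} [PseudoMetricSpace M] {U : J → Set M} (C : ContractionSystem U)

open Classical in
/-- Contract by the amount `a τ` inside `⋂ j ∈ τ, U j`, where `τ` is the set of cardinality `k` with
`a τ ≠ 0`; it is unique in the intended case of amounts supported on a chain. -/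
noncomputable def level (a : Finset J → ℝ) (k : ℕ) (x : M) : M :=
  if h : ∃ τ : Finset J, τ.card = k ∧ a τ ≠ 0 then C.map h.choose x (a h.choose) else x

/-- The composite of the partial contractions `C.level a k` for `k = n, …, 1`, larger `k` (that is,
smaller intersections) first. -/
noncomputable def composite (a : Finset J → ℝ) : ℕ → M → M
  | 0, x => x
  | n + 1, x => composite a n (C.level a (n + 1) x)

theorem level_eq_self {a : Finset J → ℝ} {k : ℕ} (ha : ∀ τ : Finset J, τ.card = k → a τ = 0)
    (x : M) : C.level a k x = x :=
  dif_neg fun ⟨τ, hcard, hτ⟩ ↦ hτ (ha τ hcard)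

theorem composite_of_le {a : Finset J → ℝ} {n m : ℕ} (hnm : n ≤ m)
    (ha : ∀ τ : Finset J, n < τ.card → a τ = 0) (x : M) :
    C.composite a m x = C.composite a n x := by
  induction m, hnm using Nat.le_induction with
  | base => rfl
  | succ m hnm ih => rw [composite, C.level_eq_self (fun τ hτ ↦ ha τ (by omega)), ih]

section Chain

variable {𝒞 : Set (Finset J)} {a b : Finset J → ℝ} {n : ℕ}

theorem level_of_mem (h𝒞 : IsChain (· ⊆ ·) 𝒞) (ha : Function.support a ⊆ 𝒞) {τ : Finset J}
    (hτ : τ ∈ 𝒞) (hne : τ.Nonempty) {x : M} (hx : x ∈ ⋂ j ∈ τ, U j) :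
    C.level a τ.card x = C.map τ x (a τ) := by
  have huniq (σ : Finset J) (hcard : σ.card = τ.card) (hσ : a σ ≠ 0) : σ = τ :=
    (subset_of_card_le_of_isChain h𝒞 (ha hσ) hτ hcard.le).antisymm
      (subset_of_card_le_of_isChain h𝒞 hτ (ha hσ) hcard.ge)
  by_cases h : ∃ σ : Finset J, σ.card = τ.card ∧ a σ ≠ 0
  · rw [level, dif_pos h, huniq _ h.choose_spec.1 h.choose_spec.2]
  · have h0 : a τ = 0 := by_contra fun h0 ↦ h ⟨τ, rfl, h0⟩
    rw [level, dif_neg h, h0, C.map_zero hne hx]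

theorem level_cases (h𝒞 : IsChain (· ⊆ ·) 𝒞) (n : ℕ) :
    (∃ τ ∈ 𝒞, τ.Nonempty ∧ τ.card = n + 1 ∧ ∀ a, Function.support a ⊆ 𝒞 →
      ∀ x ∈ ⋂ j ∈ τ, U j, C.level a (n + 1) x = C.map τ x (a τ)) ∨
    ∀ a, Function.support a ⊆ 𝒞 → ∀ x, C.level a (n + 1) x = x := by
  by_cases h : ∃ τ ∈ 𝒞, τ.card = n + 1
  · obtain ⟨τ, hτ, hcard⟩ := h
    have hne : τ.Nonempty := Finset.card_pos.1 (by omega)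
    exact .inl ⟨τ, hτ, hne, hcard, fun a ha x hx ↦ hcard ▸ C.level_of_mem h𝒞 ha hτ hne hx⟩
  · exact .inr fun a ha x ↦ C.level_eq_self
      (fun τ hcard ↦ by_contra fun hτ ↦ h ⟨τ, ha hτ, hcard⟩) x

theorem level_mem_of_card_le (h𝒞 : IsChain (· ⊆ ·) 𝒞) (ha : Function.support a ⊆ 𝒞) {x : M}
    (hx : ∀ τ ∈ 𝒞, τ.card ≤ n + 1 → x ∈ ⋂ j ∈ τ, U j) (τ : Finset J) (hτ : τ ∈ 𝒞)
    (hcard : τ.card ≤ n) : C.level a (n + 1) x ∈ ⋂ j ∈ τ, U j := by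
  rcases C.level_cases h𝒞 n with ⟨σ, hσ, hne, hσcard, hlevel⟩ | hlevel
  · have hxσ := hx σ hσ hσcard.le
    rw [hlevel a ha x hxσ]
    exact biInter_mono (subset_of_card_le_of_isChain h𝒞 hτ hσ (by omega)) (fun _ _ ↦ subset_rfl)
      (C.map_mem hne hxσ _)
  · rw [hlevel a ha x]
    exact hx τ hτ (by omega)

theorem level_mem_of_forall_mem (h𝒞 : IsChain (· ⊆ ·) 𝒞) (ha : Function.support a ⊆ 𝒞) {x : M}
    (hx : ∀ τ ∈ 𝒞, τ.card ≤ n + 1 → x ∈ ⋂ j ∈ τ, U j) {j : J} (hj : ∀ τ ∈ 𝒞, j ∈ τ)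
    (hxj : x ∈ U j) : C.level a (n + 1) x ∈ U j := by
  rcases C.level_cases h𝒞 n with ⟨σ, hσ, hne, hσcard, hlevel⟩ | hlevel
  · have hxσ := hx σ hσ hσcard.le
    rw [hlevel a ha x hxσ]
    exact mem_iInter₂.1 (C.map_mem hne hxσ _) j (hj σ hσ)
  · rwa [hlevel a ha x]

theorem composite_mem (h𝒞 : IsChain (· ⊆ ·) 𝒞) (ha : Function.support a ⊆ 𝒞) {x : M}
    (hx : ∀ τ ∈ 𝒞, τ.card ≤ n → x ∈ ⋂ j ∈ τ, U j) {j : J} (hj : ∀ τ ∈ 𝒞, j ∈ τ)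
    (hxj : x ∈ U j) : C.composite a n x ∈ U j := by
  induction n generalizing x with
  | zero => exact hxj
  | succ n ih =>
    exact ih (C.level_mem_of_card_le h𝒞 ha hx) (C.level_mem_of_forall_mem h𝒞 ha hx hj hxj)

theorem composite_eq_of_eq_one (h𝒞 : IsChain (· ⊆ ·) 𝒞) (ha : Function.support a ⊆ 𝒞) {x y : M}
    (hx : ∀ τ ∈ 𝒞, τ.card ≤ n → x ∈ ⋂ j ∈ τ, U j) (hy : ∀ τ ∈ 𝒞, τ.card ≤ n → y ∈ ⋂ j ∈ τ, U j)
    {τ : Finset J} (hτ : τ.Nonempty) (haτ : a τ = 1) (hcard : τ.card ≤ n) :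
    C.composite a n x = C.composite a n y := by
  have hτ𝒞 : τ ∈ 𝒞 := ha (by simp [haτ])
  induction n generalizing x y with
  | zero => simp [Finset.card_eq_zero.1 (Nat.le_zero.1 hcard)] at hτ
  | succ n ih =>
    rcases hcard.eq_or_lt with hcard | hcard
    · have hxτ := hx τ hτ𝒞 hcard.le
      have hyτ := hy τ hτ𝒞 hcard.le
      rw [composite, composite, ← hcard, C.level_of_mem h𝒞 ha hτ𝒞 hτ hxτ,
        C.level_of_mem h𝒞 ha hτ𝒞 hτ hyτ, haτ, C.map_one hτ hxτ hyτ]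
    · exact ih (C.level_mem_of_card_le h𝒞 ha hx) (C.level_mem_of_card_le h𝒞 ha hy) (by omega)

variable {A e : ℝ}

theorem dist_level_le (h𝒞 : IsChain (· ⊆ ·) 𝒞) (ha : Function.support a ⊆ 𝒞)
    (hb : Function.support b ⊆ 𝒞) (hA : 1 ≤ A) (hC : ∀ τ ∈ 𝒞, C.const τ ≤ A) (he : 0 ≤ e)
    (hab : ∀ τ ∈ 𝒞, |a τ - b τ| ≤ e) {x y : M}
    (hx : ∀ τ ∈ 𝒞, τ.card ≤ n + 1 → x ∈ ⋂ j ∈ τ, U j)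
    (hy : ∀ τ ∈ 𝒞, τ.card ≤ n + 1 → y ∈ ⋂ j ∈ τ, U j) :
    dist (C.level a (n + 1) x) (C.level b (n + 1) y) ≤ A * (dist x y + e) := by
  rcases C.level_cases h𝒞 n with ⟨τ, hτ, hne, hcard, hlevel⟩ | hlevel
  · have hxτ := hx τ hτ hcard.le
    have hyτ := hy τ hτ hcard.le
    rw [hlevel a ha x hxτ, hlevel b hb y hyτ]
    exact (C.dist_map_le hne hxτ hyτ _ _).trans (mul_le_mul (hC τ hτ)
      (by gcongr; exact hab τ hτ) (by positivity) (by linarith))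
  · rw [hlevel a ha x, hlevel b hb y]
    exact (le_add_of_nonneg_right he).trans (le_mul_of_one_le_left (by positivity) hA)

theorem dist_composite_le (h𝒞 : IsChain (· ⊆ ·) 𝒞) (ha : Function.support a ⊆ 𝒞)
    (hb : Function.support b ⊆ 𝒞) (hA : 1 ≤ A) (hC : ∀ τ ∈ 𝒞, C.const τ ≤ A) (he : 0 ≤ e)
    (hab : ∀ τ ∈ 𝒞, |a τ - b τ| ≤ e) {x y : M}
    (hx : ∀ τ ∈ 𝒞, τ.card ≤ n → x ∈ ⋂ j ∈ τ, U j)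
    (hy : ∀ τ ∈ 𝒞, τ.card ≤ n → y ∈ ⋂ j ∈ τ, U j) :
    dist (C.composite a n x) (C.composite b n y) ≤ (2 * A) ^ n * (dist x y + e) := by
  induction n generalizing x y with
  | zero => simpa [composite] using he
  | succ n ih =>
    calc dist (C.composite a (n + 1) x) (C.composite b (n + 1) y)
      _ ≤ (2 * A) ^ n * (dist (C.level a (n + 1) x) (C.level b (n + 1) y) + e) :=
        ih (C.level_mem_of_card_le h𝒞 ha hx) (C.level_mem_of_card_le h𝒞 hb hy)
      _ ≤ (2 * A) ^ n * (A * (dist x y + e) + A * (dist x y + e)) := by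
        gcongr
        · exact C.dist_level_le h𝒞 ha hb hA hC he hab hx hy
        · exact (le_add_of_nonneg_left dist_nonneg).trans
            (le_mul_of_one_le_left (by positivity) hA)
      _ = (2 * A) ^ (n + 1) * (dist x y + e) := by ring

end Chain

/-- The composite of all the partial contractions with the amounts `a`. -/
noncomputable def contract (a : Finset J → ℝ) (x : M) : M :=
  C.composite a (sSup (Finset.card '' Function.support a)) x

section Contract

variable {a : Finset J → ℝ} {x : M}

theorem contract_eq_composite {n : ℕ} (hn : ∀ τ, a τ ≠ 0 → τ.card ≤ n) :
    C.contract a x = C.composite a n x := by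
  have hn' : n ∈ upperBounds (Finset.card '' Function.support a) :=
    forall_mem_image.2 fun τ hτ ↦ hn τ hτ
  refine (C.composite_of_le (csSup_le' hn') (fun τ hτ ↦ ?_) x).symm
  by_contra h
  exact hτ.not_ge (le_csSup ⟨n, hn'⟩ (mem_image_of_mem _ h))

theorem contract_zero : C.contract 0 x = x :=
  C.contract_eq_composite (n := 0) (by simp)

theorem contract_mem (ha : IsChain (· ⊆ ·) (Function.support a))
    (hx : ∀ τ, a τ ≠ 0 → x ∈ ⋂ j ∈ τ, U j) {j : J} (hj : ∀ τ, a τ ≠ 0 → j ∈ τ)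
    (hxj : x ∈ U j) : C.contract a x ∈ U j :=
  C.composite_mem ha subset_rfl (fun τ hτ _ ↦ hx τ hτ) hj hxj

theorem contract_eq_of_eq_one (ha : IsChain (· ⊆ ·) (Function.support a))
    (hfin : (Function.support a).Finite) {y : M} (hx : ∀ τ, a τ ≠ 0 → x ∈ ⋂ j ∈ τ, U j)
    (hy : ∀ τ, a τ ≠ 0 → y ∈ ⋂ j ∈ τ, U j) {τ : Finset J} (hτ : τ.Nonempty) (haτ : a τ = 1) :
    C.contract a x = C.contract a y :=
  C.composite_eq_of_eq_one ha subset_rfl (fun σ hσ _ ↦ hx σ hσ) (fun σ hσ _ ↦ hy σ hσ) hτ haτ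
    (le_csSup (hfin.image _).bddAbove (mem_image_of_mem _ (by simp [haτ])))

end Contract

section LocallyLipschitz

open Asymptotics

variable {X : Type*} [PseudoMetricSpace X] {x : X → M} {a : X → Finset J → ℝ} {p₀ : X}
  {𝒞 : Set (Finset J)}

theorem eventually_dist_contract_le (h𝒞 : IsChain (· ⊆ ·) 𝒞) (hfin : 𝒞.Finite)
    (ha : ∀ τ, LocallyLipschitzAt (fun p ↦ a p τ) p₀)
    (hsupp : ∀ᶠ p in 𝓝 p₀, Function.support (a p) ⊆ 𝒞) :
    ∃ K : ℝ, ∀ᶠ p in 𝓝 (p₀, p₀), ∀ x y : M, (∀ τ ∈ 𝒞, x ∈ ⋂ j ∈ τ, U j) →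
      (∀ τ ∈ 𝒞, y ∈ ⋂ j ∈ τ, U j) →
      dist (C.contract (a p.1) x) (C.contract (a p.2) y) ≤ K * (dist x y + dist p.1 p.2) := by
  obtain ⟨A, hA⟩ := (hfin.image C.const).bddAbove
  obtain ⟨n, hn⟩ := (hfin.image Finset.card).bddAbove
  have hab : ∃ B : ℝ, ∀ᶠ p in 𝓝 (p₀, p₀), ∀ τ ∈ 𝒞, |a p.1 τ - a p.2 τ| ≤ B * dist p.1 p.2 := by
    have hsum : (fun p : X × X ↦ ∑ τ ∈ hfin.toFinset, dist (a p.1 τ) (a p.2 τ)) =O[𝓝 (p₀, p₀)]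
        fun p ↦ dist p.1 p.2 :=
      IsBigO.fun_sum fun τ _ ↦ locallyLipschitzAt_iff_isBigO.1 (ha τ)
    obtain ⟨B, hB⟩ := hsum.bound
    refine ⟨B, hB.mono fun p hp τ hτ ↦ ?_⟩
    calc |a p.1 τ - a p.2 τ|
      _ ≤ ∑ τ ∈ hfin.toFinset, dist (a p.1 τ) (a p.2 τ) :=
        Finset.single_le_sum (f := fun τ ↦ dist (a p.1 τ) (a p.2 τ))
          (fun _ _ ↦ dist_nonneg) (hfin.mem_toFinset.2 hτ)
      _ ≤ B * dist p.1 p.2 := by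
        simpa only [Real.norm_of_nonneg dist_nonneg] using (le_abs_self _).trans hp
  obtain ⟨B, hB⟩ := hab
  refine ⟨(2 * max A 1) ^ n * max B 1, ?_⟩
  rw [nhds_prod_eq] at hB ⊢
  filter_upwards [hB, hsupp.prod_mk hsupp] with p hp hsuppp x y hx hy
  rw [C.contract_eq_composite (n := n) fun τ hτ ↦ hn (mem_image_of_mem _ (hsuppp.1 hτ)),
    C.contract_eq_composite (n := n) fun τ hτ ↦ hn (mem_image_of_mem _ (hsuppp.2 hτ))]
  calc dist (C.composite (a p.1) n x) (C.composite (a p.2) n y)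
    _ ≤ (2 * max A 1) ^ n * (dist x y + max B 1 * dist p.1 p.2) :=
      C.dist_composite_le h𝒞 hsuppp.1 hsuppp.2 (le_max_right _ _)
        (fun τ hτ ↦ (hA (mem_image_of_mem _ hτ)).trans (le_max_left _ _)) (by positivity)
        (fun τ hτ ↦ (hp τ hτ).trans (by gcongr; exact le_max_left _ _))
        (fun τ hτ _ ↦ hx τ hτ) fun τ hτ _ ↦ hy τ hτ
    _ ≤ (2 * max A 1) ^ n * (max B 1 * dist x y + max B 1 * dist p.1 p.2) := by
      gcongr
      exact le_mul_of_one_le_left dist_nonneg (le_max_right _ _)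
    _ = _ := by ring

theorem isBigO_dist_contract (h𝒞 : IsChain (· ⊆ ·) 𝒞) (hfin : 𝒞.Finite)
    (ha : ∀ τ, LocallyLipschitzAt (fun p ↦ a p τ) p₀)
    (hsupp : ∀ᶠ p in 𝓝 p₀, Function.support (a p) ⊆ 𝒞)
    (hx : ∀ᶠ p in 𝓝 p₀, ∀ τ ∈ 𝒞, x p ∈ ⋂ j ∈ τ, U j) :
    (fun p : X × X ↦ dist (C.contract (a p.1) (x p.1)) (C.contract (a p.2) (x p.2)))
      =O[𝓝 (p₀, p₀)] fun p ↦ dist (x p.1) (x p.2) + dist p.1 p.2 := by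
  obtain ⟨K, hK⟩ := C.eventually_dist_contract_le h𝒞 hfin ha hsupp
  refine IsBigO.of_bound K ?_
  rw [nhds_prod_eq] at hK ⊢
  filter_upwards [hK, hx.prod_mk hx] with p hp hxp
  rw [Real.norm_of_nonneg (by positivity), Real.norm_of_nonneg (by positivity)]
  exact hp _ _ hxp.1 hxp.2

theorem isBigO_dist_contract_of_eq_one (h𝒞 : IsChain (· ⊆ ·) 𝒞) (hfin : 𝒞.Finite)
    (ha : ∀ τ, LocallyLipschitzAt (fun p ↦ a p τ) p₀)
    (hsupp : ∀ᶠ p in 𝓝 p₀, Function.support (a p) ⊆ 𝒞)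
    (hx : ∀ᶠ p in 𝓝 p₀, ∀ τ ∈ 𝒞, x p ∈ ⋂ j ∈ τ, U j) :
    (fun p : X × X ↦ dist (C.contract (a p.1) (x p.1)) (C.contract (a p.2) (x p.2)))
      =O[𝓝 (p₀, p₀) ⊓ 𝓟 {p | ∃ τ : Finset J, τ.Nonempty ∧ (a p.1 τ = 1 ∨ a p.2 τ = 1)}]
      fun p ↦ dist p.1 p.2 := by
  have heq (p : X) (hp : Function.support (a p) ⊆ 𝒞) {y z : M} (hy : ∀ τ ∈ 𝒞, y ∈ ⋂ j ∈ τ, U j)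
      (hz : ∀ τ ∈ 𝒞, z ∈ ⋂ j ∈ τ, U j) {τ : Finset J} (hτ : τ.Nonempty) (haτ : a p τ = 1) :
      C.contract (a p) y = C.contract (a p) z :=
    C.contract_eq_of_eq_one (h𝒞.mono hp) (hfin.subset hp) (fun σ hσ ↦ hy σ (hp hσ))
      (fun σ hσ ↦ hz σ (hp hσ)) hτ haτ
  obtain ⟨K, hK⟩ := C.eventually_dist_contract_le h𝒞 hfin ha hsupp
  refine IsBigO.of_bound K (eventually_inf_principal.2 ?_)
  rw [nhds_prod_eq] at hK ⊢
  filter_upwards [hK, hx.prod_mk hx, hsupp.prod_mk hsupp] with p hp hxp hsuppp ⟨τ, hτ, haτ⟩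
  rw [Real.norm_of_nonneg dist_nonneg, Real.norm_of_nonneg dist_nonneg]
  rcases haτ with haτ | haτ
  · rw [heq p.1 hsuppp.1 hxp.1 hxp.2 hτ haτ]
    simpa using hp _ _ hxp.2 hxp.2
  · rw [heq p.2 hsuppp.2 hxp.2 hxp.1 hτ haτ]
    simpa using hp _ _ hxp.1 hxp.1

end LocallyLipschitz

end ContractionSystem

/-- The Banach space `ℓ^∞(J)` containing the geometric realization of the nerve. -/
abbrev LInf (J : Type*) := lp (fun _ : J ↦ ℝ) ⊤

section ConeDistance

/-- The length of the chord of the unit circle that subtends the angle `min π d`. -/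
noncomputable def chord (d : ℝ) : ℝ := 2 * Real.sin (min Real.pi d / 2)

theorem chord_nonneg {d : ℝ} (hd : 0 ≤ d) : 0 ≤ chord d := by
  have hmin : 0 ≤ min Real.pi d := le_min Real.pi_pos.le hd
  have := Real.sin_nonneg_of_nonneg_of_le_pi (x := min Real.pi d / 2) (by positivity)
    (by linarith [min_le_left Real.pi d])
  unfold chord
  positivity

theorem chord_le_min_two {d : ℝ} (hd : 0 ≤ d) : chord d ≤ min 2 d := by
  have : 0 ≤ min Real.pi d := le_min Real.pi_pos.le hd
  have hsin := Real.sin_le (x := min Real.pi d / 2) (by positivity)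
  exact le_min (by unfold chord; linarith [Real.sin_le_one (min Real.pi d / 2)])
    (by unfold chord; linarith [min_le_right Real.pi d])

theorem min_two_le_two_mul_chord {d : ℝ} (hd : 0 ≤ d) : min 2 d ≤ 2 * chord d := by
  have : 0 ≤ min Real.pi d := le_min Real.pi_pos.le hd
  calc min 2 d
    _ ≤ min Real.pi d := min_le_min_right d Real.two_le_pi
    _ = 4 * (2 / 4 * (min Real.pi d / 2)) := by ring
    _ ≤ 4 * (2 / Real.pi * (min Real.pi d / 2)) := by gcongr; exact Real.pi_le_four
    _ ≤ 4 * Real.sin (min Real.pi d / 2) := by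
      gcongr
      exact Real.mul_le_sin (by positivity) (by linarith [min_le_left Real.pi d])
    _ = 2 * chord d := by unfold chord; ring

variable {M : Type*} [PseudoMetricSpace M] {L : ℝ}

theorem coneDist_eq_sqrt_chord (c c' : M × ℝ) :
    coneDist L c c' =
      √((c.2 - c'.2) ^ 2 + (L - c.2) * (L - c'.2) * chord (dist c.1 c'.1) ^ 2) := by
  have hcos : Real.cos (min Real.pi (dist c.1 c'.1)) = 1 - chord (dist c.1 c'.1) ^ 2 / 2 := by
    rw [chord, mul_pow, Real.sin_sq_eq_half_sub]
    ring_nf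
  rw [coneDist, hcos]
  ring_nf

/-- An `ℓ¹`-type pseudometric bi-Lipschitz to the cone distance, for which the triangle inequality
is elementary. -/
noncomputable def coneDistL1 (L : ℝ) (c c' : M × ℝ) : ℝ :=
  |c.2 - c'.2| + min (L - c.2) (L - c'.2) * min 2 (dist c.1 c'.1)

theorem coneDistL1_comm (c c' : M × ℝ) : coneDistL1 L c c' = coneDistL1 L c' c := by
  rw [coneDistL1, abs_sub_comm, min_comm, dist_comm, coneDistL1]

theorem min_mul_min_two_dist_nonneg {c c' : M × ℝ} (hc : c.2 ≤ L) (hc' : c'.2 ≤ L) :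
    0 ≤ min (L - c.2) (L - c'.2) * min 2 (dist c.1 c'.1) :=
  mul_nonneg (le_min (sub_nonneg.2 hc) (sub_nonneg.2 hc')) (le_min zero_le_two dist_nonneg)

theorem abs_sub_add_min_mul_triangle {a b e u v w : ℝ} (ha : 0 ≤ a) (hb : 0 ≤ b) (he : 0 ≤ e)
    (hu : 0 ≤ u) (hv : 0 ≤ v) (hw : w ≤ 2) (huv : w ≤ u + v) :
    |a - e| + min a e * w ≤ (|a - b| + min a b * u) + (|b - e| + min b e * v) := by
  wlog hae : a ≤ e generalizing a e u v
  · have := this he ha hv hu (by linarith) (le_of_not_ge hae)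
    rw [abs_sub_comm, min_comm, abs_sub_comm a b, min_comm a b, abs_sub_comm b e, min_comm b e]
    linarith
  rw [min_eq_left hae, abs_of_nonpos (by linarith : a - e ≤ 0)]
  rcases le_total a b with hab | hba
  · rw [min_eq_left hab]
    have hav : a * v ≤ min b e * v := by gcongr; exact le_min hab hae
    have hawuv : a * w ≤ a * (u + v) := by gcongr
    linarith [neg_abs_le (a - b), neg_abs_le (b - e)]
  · rw [min_eq_right hba, min_eq_left (hba.trans hae), abs_of_nonneg (by linarith : 0 ≤ a - b),
      abs_of_nonpos (by linarith : b - e ≤ 0)]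
    have hbwuv : b * w ≤ b * (u + v) := by gcongr
    have habw : (a - b) * w ≤ (a - b) * 2 := by gcongr
    linarith

theorem min_two_dist_triangle (x y z : M) :
    min 2 (dist x z) ≤ min 2 (dist x y) + min 2 (dist y z) := by
  have hxz := dist_triangle x y z
  have hxy := dist_nonneg (x := x) (y := y)
  have hyz := dist_nonneg (x := y) (y := z)
  grind

theorem min_two_le_max_mul {K d d' e : ℝ} (hd : 0 ≤ d) (he : 0 ≤ e) (h : d' ≤ K * (d + e)) :
    min 2 d' ≤ max K 1 * (min 2 d + e) := by
  rcases le_total 2 d with hd2 | hd2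
  · rw [min_eq_left hd2]
    calc min 2 d' ≤ 1 * (2 + 0) := by simp
      _ ≤ max K 1 * (2 + e) := by gcongr; exact le_max_right _ _
  · rw [min_eq_right hd2]
    calc min 2 d' ≤ K * (d + e) := (min_le_right _ _).trans h
      _ ≤ max K 1 * (d + e) := by gcongr; exact le_max_left _ _

theorem coneDistL1_triangle {c c' c'' : M × ℝ} (hc : c.2 ≤ L) (hc' : c'.2 ≤ L) (hc'' : c''.2 ≤ L) :
    coneDistL1 L c c'' ≤ coneDistL1 L c c' + coneDistL1 L c' c'' := by
  have hsub (s t : ℝ) : |s - t| = |(L - s) - (L - t)| := by rw [abs_sub_comm]; ring_nf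
  rw [coneDistL1, coneDistL1, coneDistL1, hsub c.2 c''.2, hsub c.2 c'.2, hsub c'.2 c''.2]
  exact abs_sub_add_min_mul_triangle (sub_nonneg.2 hc) (sub_nonneg.2 hc') (sub_nonneg.2 hc'')
    (le_min zero_le_two dist_nonneg) (le_min zero_le_two dist_nonneg) (min_le_left _ _)
    (min_two_dist_triangle _ _ _)

theorem sub_mul_sub_eq_min_mul (s t : ℝ) :
    (L - s) * (L - t) = min (L - s) (L - t) * (min (L - s) (L - t) + |s - t|) := by
  rcases le_total s t with h | h
  · rw [min_eq_right (by linarith), abs_of_nonpos (by linarith)]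
    ring
  · rw [min_eq_left (by linarith), abs_of_nonneg (by linarith)]
    ring

theorem coneDist_le_coneDistL1 {c c' : M × ℝ} (hc : c.2 ≤ L) (hc' : c'.2 ≤ L) :
    coneDist L c c' ≤ coneDistL1 L c c' := by
  rw [coneDist_eq_sqrt_chord, sub_mul_sub_eq_min_mul, coneDistL1, ← sq_abs (c.2 - c'.2)]
  have hp : 0 ≤ min (L - c.2) (L - c'.2) := le_min (sub_nonneg.2 hc) (sub_nonneg.2 hc')
  have hchord := chord_nonneg (dist_nonneg (x := c.1) (y := c'.1))
  have hle := chord_le_min_two (dist_nonneg (x := c.1) (y := c'.1))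
  have hle2 := hle.trans (min_le_left _ _)
  generalize min (L - c.2) (L - c'.2) = p at *
  generalize |c.2 - c'.2| = r, abs_nonneg (c.2 - c'.2) = hr at *
  generalize chord (dist c.1 c'.1) = h at *
  generalize min 2 (dist c.1 c'.1) = w at *
  have hw : 0 ≤ w := hchord.trans hle
  refine Real.sqrt_le_iff.2 ⟨by positivity, ?_⟩
  calc r ^ 2 + p * (p + r) * h ^ 2
    _ = r ^ 2 + p ^ 2 * h ^ 2 + p * r * (h * h) := by ring
    _ ≤ r ^ 2 + p ^ 2 * w ^ 2 + p * r * (2 * w) := by gcongr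
    _ = (r + p * w) ^ 2 := by ring

theorem coneDistL1_le_three_mul_coneDist {c c' : M × ℝ} (hc : c.2 ≤ L) (hc' : c'.2 ≤ L) :
    coneDistL1 L c c' ≤ 3 * coneDist L c c' := by
  rw [coneDist_eq_sqrt_chord, sub_mul_sub_eq_min_mul, coneDistL1]
  have hp : 0 ≤ min (L - c.2) (L - c'.2) := le_min (sub_nonneg.2 hc) (sub_nonneg.2 hc')
  have hle := min_two_le_two_mul_chord (dist_nonneg (x := c.1) (y := c'.1))
  generalize min (L - c.2) (L - c'.2) = p at *
  generalize chord (dist c.1 c'.1) = h at *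
  have hr : |c.2 - c'.2| ≤ √((c.2 - c'.2) ^ 2 + p * (p + |c.2 - c'.2|) * h ^ 2) :=
    Real.abs_le_sqrt (le_add_of_nonneg_right (by positivity))
  have hph : p * h ≤ √((c.2 - c'.2) ^ 2 + p * (p + |c.2 - c'.2|) * h ^ 2) := by
    refine Real.le_sqrt_of_sq_le ?_
    have : 0 ≤ (c.2 - c'.2) ^ 2 + p * |c.2 - c'.2| * h ^ 2 := by positivity
    linarith
  linarith [mul_le_mul_of_nonneg_left hle hp]

variable {J : Type*}

/-- The distance on the mapping cylinder obtained by adding the distance in the nerve to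
`coneDistL1`. -/
noncomputable def cylDistL1 (L : ℝ) (z w : LInf J × M × ℝ) : ℝ :=
  dist z.1 w.1 + coneDistL1 L z.2 w.2

theorem cylDistL1_self (z : LInf J × M × ℝ) : cylDistL1 L z z = 0 := by
  simp [cylDistL1, coneDistL1]

theorem cylDistL1_comm (z w : LInf J × M × ℝ) :
    cylDistL1 L z w = cylDistL1 L w z := by
  rw [cylDistL1, dist_comm, coneDistL1_comm, cylDistL1]

theorem cylDistL1_triangle {z w v : LInf J × M × ℝ} (hz : z.2.2 ≤ L)
    (hw : w.2.2 ≤ L) (hv : v.2.2 ≤ L) :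
    cylDistL1 L z v ≤ cylDistL1 L z w + cylDistL1 L w v := by
  unfold cylDistL1
  linarith [dist_triangle z.1 w.1 v.1, coneDistL1_triangle hz hw hv]

theorem cylDistInf_le_cylDistL1 {z w : LInf J × M × ℝ} (hz : z.2.2 ≤ L)
    (hw : w.2.2 ≤ L) : cylDistInf L z w ≤ cylDistL1 L z w := by
  have hcone : 0 ≤ coneDist L z.2 w.2 := Real.sqrt_nonneg _
  calc cylDistInf L z w
    _ ≤ dist z.1 w.1 + coneDist L z.2 w.2 :=
      Real.sqrt_le_iff.2 ⟨by positivity, by nlinarith [dist_nonneg (x := z.1) (y := w.1)]⟩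
    _ ≤ cylDistL1 L z w := by
      unfold cylDistL1
      gcongr
      exact coneDist_le_coneDistL1 hz hw

theorem cylDistL1_le_four_mul_cylDistInf {z w : LInf J × M × ℝ} (hz : z.2.2 ≤ L)
    (hw : w.2.2 ≤ L) : cylDistL1 L z w ≤ 4 * cylDistInf L z w := by
  have hnerve : dist z.1 w.1 ≤ cylDistInf L z w :=
    Real.le_sqrt_of_sq_le (le_add_of_nonneg_right (sq_nonneg _))
  have hcone : coneDist L z.2 w.2 ≤ cylDistInf L z w :=
    Real.le_sqrt_of_sq_le (le_add_of_nonneg_left (sq_nonneg _))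
  unfold cylDistL1
  linarith [coneDistL1_le_three_mul_coneDist hz hw]

end ConeDistance

section Nerve

variable {J : Type*}

theorem lipschitzWith_one_coord (j : J) : LipschitzWith 1 fun θ : LInf J ↦ θ j :=
  lp.lipschitzWith_one_eval ⊤ j

theorem coord_le_norm (θ : LInf J) (j : J) : θ j ≤ ‖θ‖ :=
  (le_abs_self _).trans (lp.norm_apply_le_norm ENNReal.top_ne_zero θ j)

section

variable {M : Type*} [MetricSpace M] {U : J → Set M} {θ : LInf J}

theorem exists_pos_coord_eq_norm (hθ : θ ∈ NerveSetInf U) : ∃ i, 0 < θ i ∧ θ i = ‖θ‖ := by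
  obtain ⟨hIcc, hfin, hsum, -⟩ := hθ
  obtain ⟨k, hk⟩ : ∃ k, θ k ≠ 0 := by
    by_contra! h
    simp [h] at hsum
  obtain ⟨i, -, hi⟩ := exists_max_image _ (fun j ↦ θ j) hfin ⟨k, hk⟩
  have hik : θ k ≤ θ i := hi k hk
  have hpos : 0 < θ i := ((hIcc k).1.lt_of_ne' hk).trans_le hik
  refine ⟨i, hpos, le_antisymm ?_ ?_⟩
  · exact coord_le_norm θ i
  · refine lp.norm_le_of_forall_le hpos.le fun j ↦ ?_
    rw [Real.norm_of_nonneg (hIcc j).1]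
    by_cases hj : θ j = 0
    · exact hj ▸ hpos.le
    · exact hi j hj

theorem norm_pos_of_mem_nerve (hθ : θ ∈ NerveSetInf U) : 0 < ‖θ‖ := by
  obtain ⟨i, hi, hnorm⟩ := exists_pos_coord_eq_norm hθ
  exact hnorm ▸ hi

theorem eventually_support_subset_of_mem_nerve
    (hU : ∀ i, {j | (U i ∩ U j).Nonempty}.Finite) (hθ : θ ∈ NerveSetInf U) :
    ∃ T : Finset J, ∀ᶠ η in 𝓝 θ, η ∈ NerveSetInf U → ∀ j, η j ≠ 0 → j ∈ T := by
  obtain ⟨i, hi, -⟩ := exists_pos_coord_eq_norm hθ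
  have hpos : ∀ᶠ η : LInf J in 𝓝 θ, 0 < η i :=
    (lipschitzWith_one_coord i).continuous.continuousAt.eventually_const_lt hi
  refine ⟨(hU i).toFinset, hpos.mono fun η hηi ⟨_, _, _, x, hx⟩ j hj ↦ ?_⟩
  rw [mem_iInter₂] at hx
  exact (hU i).mem_toFinset.2 ⟨x, hx i hηi.ne', hx j hj⟩

end

/-- The open set of those `θ` whose coordinates in the nonempty set `τ` are positive and exceed all
the others; these are neighbourhoods of the barycentres of the simplices. -/
def dominant (τ : Finset J) : Set (LInf J) :=
  {θ | τ.Nonempty ∧ ∀ i ∈ τ, 0 < θ i ∧ ∀ j ∉ τ, θ j < θ i}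

theorem isChain_dominant (θ : LInf J) : IsChain (· ⊆ ·) {τ : Finset J | θ ∈ dominant τ} := by
  rintro σ ⟨-, hσ⟩ τ ⟨-, hτ⟩ -
  by_contra! h
  obtain ⟨i, hiσ, hiτ⟩ := Finset.not_subset.1 h.1
  obtain ⟨j, hjτ, hjσ⟩ := Finset.not_subset.1 h.2
  exact lt_asymm ((hσ i hiσ).2 j hjσ) ((hτ j hjτ).2 i hiτ)

theorem finite_dominant {θ : LInf J} (hθ : (Function.support fun j ↦ θ j).Finite) :
    {τ : Finset J | θ ∈ dominant τ}.Finite :=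
  hθ.toFinset.powerset.finite_toSet.subset fun τ hτ ↦ by
    simpa [subset_def] using fun i hi ↦ (hτ.2 i hi).1.ne'

theorem le_infDist_compl_dominant {τ : Finset J} {θ : LInf J} {r : ℝ}
    (hθ : ∀ i ∈ τ, r ≤ θ i ∧ ∀ j ∉ τ, θ j + 2 * r ≤ θ i) (hτ : τ.Nonempty) :
    r ≤ infDist θ (dominant τ)ᶜ := by
  obtain ⟨k, hk⟩ := hτ
  have hzero : (0 : LInf J) ∉ dominant τ := fun h ↦ by simpa using (h.2 k hk).1
  refine (le_infDist ⟨0, hzero⟩).2 fun η hη ↦ le_of_not_gt fun hdist ↦ hη ⟨⟨k, hk⟩, fun i hi ↦ ?_⟩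
  have hclose (j : J) : |θ j - η j| < r := by
    simpa [Real.dist_eq] using ((lipschitzWith_one_coord j).dist_le_mul θ η).trans_lt
      (by simpa using hdist)
  refine ⟨by linarith [(hθ i hi).1, (abs_lt.1 (hclose i)).2], fun j hj ↦ ?_⟩
  linarith [(hθ i hi).2 j hj, (abs_lt.1 (hclose i)).2, (abs_lt.1 (hclose j)).1]

/-- The distance from `θ` to the complement of `dominant τ`, normalised so that every point of the
nerve has depth at least `1` in some `dominant τ`. -/
noncomputable def depth (τ : Finset J) (θ : LInf J) : ℝ :=
  infDist θ (dominant τ)ᶜ / (‖θ‖ * (1 / 2) ^ (τ.card + 2))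

theorem mem_dominant_of_depth_ne_zero {τ : Finset J} {θ : LInf J} (h : depth τ θ ≠ 0) :
    θ ∈ dominant τ := by
  by_contra hθ
  exact h (by rw [depth, infDist_zero_of_mem (mem_compl hθ), zero_div])

theorem LocallyLipschitzAt.depth {θ : LInf J} (hθ : 0 < ‖θ‖) (τ : Finset J) :
    LocallyLipschitzAt (depth τ) θ :=
  (of_lipschitzWith (lipschitz_infDist_pt _) θ).div
    ((of_lipschitzWith lipschitzWith_one_norm θ).mul (.const _ _)) (by positivity)

-- A maximal set `τ` whose coordinates are all at least `e τ.card` is followed by a gap: every other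
-- coordinate lies below `e (τ.card + 1)`.
theorem exists_one_le_depth {M : Type*} [MetricSpace M] {U : J → Set M} {θ : LInf J}
    (hθ : θ ∈ NerveSetInf U) : ∃ τ, 1 ≤ depth τ θ := by
  classical
  obtain ⟨i, -, hnorm⟩ := exists_pos_coord_eq_norm hθ
  have hpos := norm_pos_of_mem_nerve hθ
  let e (k : ℕ) : ℝ := ‖θ‖ * (1 / 2 + (1 / 2) ^ k)
  let heavy : Set (Finset J) := {τ | ∀ j ∈ τ, e τ.card ≤ θ j}
  have hfin : heavy.Finite := hθ.2.1.toFinset.powerset.finite_toSet.subset fun τ hτ ↦ by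
    simpa [subset_def] using fun j hj ↦ ((by positivity : 0 < e τ.card).trans_le (hτ j hj)).ne'
  have hi : {i} ∈ heavy := fun j hj ↦ by
    rw [Finset.mem_singleton.1 hj, hnorm, Finset.card_singleton]
    exact le_of_eq (by ring)
  obtain ⟨τ, hiτ, hτ⟩ := hfin.exists_le_maximal hi
  have hstep : e τ.card = e (τ.card + 1) + 2 * (‖θ‖ * (1 / 2) ^ (τ.card + 2)) := by
    simp only [e]; ring
  have hr : 0 < ‖θ‖ * (1 / 2) ^ (τ.card + 2) := by positivity
  have hrest (j : J) (hj : j ∉ τ) : θ j < e (τ.card + 1) := by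
    by_contra! hle
    refine hj (hτ.2 (y := insert j τ) (fun k hk ↦ ?_) (Finset.subset_insert j τ)
      (Finset.mem_insert_self j τ))
    rw [Finset.card_insert_of_notMem hj]
    rcases Finset.mem_insert.1 hk with rfl | hk
    · exact hle
    · linarith [hτ.1 k hk]
  refine ⟨τ, (one_le_div hr).2 (le_infDist_compl_dominant (fun k hk ↦ ⟨?_, fun j hj ↦ ?_⟩)
    ⟨i, Finset.singleton_subset_iff.1 hiτ⟩)⟩
  · have he : 0 < e (τ.card + 1) := by positivity
    have hk : e τ.card ≤ θ k := hτ.1 k hk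
    linarith
  · linarith [hτ.1 k hk, hrest j hj]

end Nerve

section Prune

variable {J : Type*}

open Classical in
/-- The weights `w`, rescaled to have total mass `1`, as an element of `ℓ^∞(J)`. The sums are
finite in the intended case, which is that of finitely supported weights with nonzero mass. -/
noncomputable def normalizedWeight (w : J → ℝ) : LInf J :=
  (∑ᶠ i, w i)⁻¹ • ∑ᶠ j, lp.single ⊤ j (w j)

section Normalized

variable {w : J → ℝ} {T : Finset J}

open Classical in
theorem finsum_single_eq_sum (hT : Function.support w ⊆ T) :
    (∑ᶠ j, lp.single ⊤ j (w j) : LInf J) = ∑ j ∈ T, lp.single ⊤ j (w j) :=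
  finsum_eq_sum_of_support_subset _ fun j hj ↦ hT fun h0 : w j = 0 ↦ hj (by simp [h0])

theorem normalizedWeight_apply (hw : (Function.support w).Finite) (j : J) :
    normalizedWeight w j = (∑ᶠ i, w i)⁻¹ * w j := by
  classical
  rw [normalizedWeight, finsum_single_eq_sum hw.coe_toFinset.ge, lp.coeFn_smul, Pi.smul_apply,
    lp.coeFn_sum, Finset.sum_apply, smul_eq_mul]
  congr 1
  simp [lp.single_apply, Finset.sum_pi_single, eq_comm]

theorem normalizedWeight_mem_nerve {M : Type*} [MetricSpace M] {U : J → Set M}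
    (hw : (Function.support w).Finite) (hnonneg : ∀ j, 0 ≤ w j) (hpos : 0 < ∑ᶠ i, w i)
    (hU : (⋂ j ∈ Function.support w, U j).Nonempty) : normalizedWeight w ∈ NerveSetInf U := by
  have hsupp : (Function.support fun j ↦ normalizedWeight w j) = Function.support w := by
    ext j
    simp [normalizedWeight_apply hw, hpos.ne']
  refine ⟨fun j ↦ ?_, hsupp ▸ hw, ?_, hsupp ▸ hU⟩
  · rw [normalizedWeight_apply hw, inv_mul_eq_div]
    exact ⟨div_nonneg (hnonneg j) hpos.le,
      div_le_one_of_le₀ (single_le_finsum j hw hnonneg) hpos.le⟩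
  · simp only [normalizedWeight_apply hw, ← mul_finsum]
    exact inv_mul_cancel₀ hpos.ne'

theorem normalizedWeight_coe {θ : LInf J} (hfin : (Function.support fun j ↦ θ j).Finite)
    (hsum : ∑ᶠ j, θ j = 1) : normalizedWeight (fun j ↦ θ j) = θ := by
  ext j
  rw [normalizedWeight_apply hfin, hsum, inv_one, one_mul]

theorem LocallyLipschitzAt.normalizedWeight {X : Type*} [PseudoMetricSpace X] {x : X}
    {w : X → J → ℝ} (hT : ∀ᶠ y in 𝓝 x, Function.support (w y) ⊆ T)
    (hw : ∀ j, LocallyLipschitzAt (fun y ↦ w y j) x) (hpos : ∑ᶠ j, w x j ≠ 0) :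
    LocallyLipschitzAt (fun y ↦ normalizedWeight (w y)) x := by
  classical
  have hsum : (fun y ↦ ∑ᶠ j, w y j) =ᶠ[𝓝 x] fun y ↦ ∑ j ∈ T, w y j :=
    hT.mono fun y hy ↦ finsum_eq_sum_of_support_subset _ hy
  have hsingle : (fun y ↦ (∑ᶠ j, lp.single ⊤ j (w y j) : LInf J)) =ᶠ[𝓝 x]
      fun y ↦ ∑ j ∈ T, lp.single ⊤ j (w y j) :=
    hT.mono fun y hy ↦ finsum_single_eq_sum hy
  have hmass : LocallyLipschitzAt (fun y ↦ ∑ᶠ j, w y j) x := (sum T hw).congr hsum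
  have hinv : LocallyLipschitzAt (fun y ↦ (∑ᶠ j, w y j)⁻¹) x := by
    simpa only [one_div] using (const 1 x).div hmass hpos
  exact hinv.smul ((sum T fun j ↦
    (of_lipschitzWith (lp.isometry_single j).lipschitz _).comp (hw j)).congr hsingle)

end Normalized

/-- The weights of `θ`, where each vertex `j` is damped by the factor `1 - c τ` for every `τ` not
containing `j`. -/
noncomputable def dampedWeight (c : Finset J → ℝ) (θ : LInf J) (j : J) : ℝ :=
  θ j * ∏ᶠ τ ∈ {τ : Finset J | j ∉ τ}, (1 - c τ)

/-- The push of `θ` towards the faces `τ` of its simplex by the amounts `c τ`. -/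
noncomputable def prune (c : Finset J → ℝ) (θ : LInf J) : LInf J :=
  normalizedWeight (dampedWeight c θ)

variable {c : Finset J → ℝ} {θ : LInf J}

theorem support_dampedWeight_subset :
    Function.support (dampedWeight c θ) ⊆ Function.support fun j ↦ θ j :=
  Function.support_mul_subset_left _ _

theorem mem_of_dampedWeight_ne_zero (hfin : (Function.support c).Finite) {j : J}
    (hj : dampedWeight c θ j ≠ 0) {τ : Finset J} (hτ : c τ = 1) : j ∈ τ := by
  by_contra hjτ
  refine right_ne_zero_of_mul hj ?_
  rw [finprod_mem_def]
  refine finprod_eq_zero _ τ ?_ (hfin.subset fun σ hσ h0 ↦ hσ ?_)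
  · simp [hjτ, hτ]
  · simp [mulIndicator_apply_eq_one, h0]

theorem dampedWeight_nonneg (hc : ∀ τ, c τ ≤ 1) {j : J} (hθ : 0 ≤ θ j) :
    0 ≤ dampedWeight c θ j :=
  mul_nonneg hθ <| finprod_nonneg fun τ ↦ finprod_nonneg fun _ ↦ sub_nonneg.2 (hc τ)

theorem dampedWeight_eq_self {j : J} (hj : ∀ τ, c τ ≠ 0 → j ∈ τ) : dampedWeight c θ j = θ j := by
  rw [dampedWeight, finprod_mem_eq_one_of_forall_eq_one, mul_one]
  intro τ hτ
  rw [not_imp_comm.1 (hj τ) hτ, sub_zero]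

theorem LocallyLipschitzAt.dampedWeight {X : Type*} [PseudoMetricSpace X] {x : X}
    {c : X → Finset J → ℝ} {θ : X → LInf J} {S : Finset (Finset J)}
    (hS : ∀ᶠ y in 𝓝 x, Function.support (c y) ⊆ S)
    (hc : ∀ τ, LocallyLipschitzAt (fun y ↦ c y τ) x) (hθ : LocallyLipschitzAt θ x) (j : J) :
    LocallyLipschitzAt (fun y ↦ dampedWeight (c y) (θ y) j) x := by
  classical
  refine ((of_lipschitzWith (lipschitzWith_one_coord j) _).comp hθ).mul ?_
  refine (prod (S.filter (j ∉ ·)) fun τ ↦ (const 1 x).sub (hc τ)).congr (hS.mono fun y hy ↦ ?_)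
  refine finprod_mem_eq_prod_of_inter_mulSupport_eq _ (ext fun τ ↦ ?_)
  have hτ (h : 1 - c y τ ≠ 1) : τ ∈ S := hy fun h0 : c y τ = 0 ↦ h (by rw [h0, sub_zero])
  simp only [mem_inter_iff, mem_ofPred_eq, Function.mem_mulSupport, Finset.coe_filter]
  tauto

section Nerve

variable {M : Type*} [MetricSpace M] {U : J → Set M}

theorem finsum_dampedWeight_pos (hθ : θ ∈ NerveSetInf U) (hc : ∀ τ, c τ ≤ 1)
    (hdom : ∀ τ, c τ ≠ 0 → θ ∈ dominant τ) : 0 < ∑ᶠ j, dampedWeight c θ j := by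
  obtain ⟨i, hi, hnorm⟩ := exists_pos_coord_eq_norm hθ
  refine finsum_pos (fun j ↦ dampedWeight_nonneg hc (hθ.1 j).1) ⟨i, ?_⟩
    (hθ.2.1.subset support_dampedWeight_subset)
  rw [dampedWeight_eq_self fun τ hτ ↦ ?_]
  · exact hi
  · obtain ⟨⟨k, hk⟩, hτk⟩ := hdom τ hτ
    by_contra hiτ
    exact ((hτk k hk).2 i hiτ).not_ge (hnorm ▸ coord_le_norm θ k)

theorem prune_ne_zero (hθ : θ ∈ NerveSetInf U) {j : J} (hj : prune c θ j ≠ 0) :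
    dampedWeight c θ j ≠ 0 := by
  rw [prune, normalizedWeight_apply (hθ.2.1.subset support_dampedWeight_subset)] at hj
  exact right_ne_zero_of_mul hj

theorem prune_mem_nerve (hθ : θ ∈ NerveSetInf U) (hc : ∀ τ, c τ ≤ 1)
    (hdom : ∀ τ, c τ ≠ 0 → θ ∈ dominant τ) : prune c θ ∈ NerveSetInf U :=
  normalizedWeight_mem_nerve (hθ.2.1.subset support_dampedWeight_subset)
    (fun j ↦ dampedWeight_nonneg hc (hθ.1 j).1) (finsum_dampedWeight_pos hθ hc hdom)
    (hθ.2.2.2.mono (biInter_subset_biInter_left support_dampedWeight_subset))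

theorem prune_zero (hθ : θ ∈ NerveSetInf U) : prune 0 θ = θ := by
  have hdamped : dampedWeight 0 θ = fun j ↦ θ j :=
    funext fun j ↦ dampedWeight_eq_self fun τ hτ ↦ (hτ rfl).elim
  rw [prune, hdamped, normalizedWeight_coe hθ.2.1 hθ.2.2.1]

end Nerve

end Prune

/-- The representatives `(θ, x, t)` of the points of the mapping cylinder for which `x` lies in all
the sets `U j` with `θ j ≠ 0`, at the apex `t = L` too; every point of the mapping cylinder has such
a representative. -/
@[ext]
structure ReducedCylinder {M J : Type*} [MetricSpace M] (U : J → Set M) (L : ℝ) where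
  weight : LInf J
  point : M
  height : ℝ
  weight_mem : weight ∈ NerveSetInf U
  point_mem : ∀ j, weight j ≠ 0 → point ∈ U j
  height_mem : height ∈ Icc 0 L

namespace ReducedCylinder

open Asymptotics

variable {M J : Type*} [MetricSpace M] {U : J → Set M} {L : ℝ}

/-- The underlying triple `(θ, x, t)`. -/
def toTriple (z : ReducedCylinder U L) : LInf J × M × ℝ := (z.weight, z.point, z.height)

noncomputable instance : PseudoMetricSpace (ReducedCylinder U L) where
  dist z w := cylDistL1 L z.toTriple w.toTriple
  dist_self z := cylDistL1_self z.toTriple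
  dist_comm z w := cylDistL1_comm z.toTriple w.toTriple
  dist_triangle z w v := cylDistL1_triangle z.height_mem.2 w.height_mem.2 v.height_mem.2

theorem dist_eq (z w : ReducedCylinder U L) :
    dist z w = dist z.weight w.weight + (dist z.height w.height +
      min (L - z.height) (L - w.height) * min 2 (dist z.point w.point)) := rfl

theorem min_mul_min_nonneg (z w : ReducedCylinder U L) :
    0 ≤ min (L - z.height) (L - w.height) * min 2 (dist z.point w.point) :=
  min_mul_min_two_dist_nonneg (c := z.toTriple.2) (c' := w.toTriple.2) z.height_mem.2 w.height_mem.2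

theorem lipschitzWith_weight : LipschitzWith 1 (weight : ReducedCylinder U L → LInf J) :=
  .of_dist_le_mul fun z w ↦ by
    rw [dist_eq, NNReal.coe_one, one_mul]
    linarith [min_mul_min_nonneg z w, dist_nonneg (x := z.height) (y := w.height)]

theorem lipschitzWith_height : LipschitzWith 1 (height : ReducedCylinder U L → ℝ) :=
  .of_dist_le_mul fun z w ↦ by
    rw [dist_eq, NNReal.coe_one, one_mul]
    linarith [min_mul_min_nonneg z w, dist_nonneg (x := z.weight) (y := w.weight)]

theorem min_mul_min_le_dist (z w : ReducedCylinder U L) :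
    min (L - z.height) (L - w.height) * min 2 (dist z.point w.point) ≤ dist z w := by
  rw [dist_eq]
  linarith [dist_nonneg (x := z.weight) (y := w.weight),
    dist_nonneg (x := z.height) (y := w.height)]

theorem locallyLipschitzAt_point {z : ReducedCylinder U L} (hz : z.height < L) :
    LocallyLipschitzAt point z := by
  set δ := (L - z.height) / 2 with hδ_def
  have hδ : 0 < δ := by linarith
  have hheight : ∀ᶠ w : ReducedCylinder U L in 𝓝 z, δ ≤ L - w.height :=
    (lipschitzWith_height.continuous.continuousAt.eventually_lt_const
      (by linarith : z.height < L - δ)).mono fun w hw ↦ by linarith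
  have hdist : ∀ᶠ p : ReducedCylinder U L × ReducedCylinder U L in 𝓝 (z, z), dist p.1 p.2 < δ :=
    continuous_dist.continuousAt.eventually_lt_const (by simpa using hδ)
  refine locallyLipschitzAt_iff_isBigO.2 (IsBigO.of_bound δ⁻¹ ?_)
  rw [nhds_prod_eq] at hdist ⊢
  filter_upwards [hdist, hheight.prod_mk hheight] with p hp hpδ
  rw [Real.norm_of_nonneg dist_nonneg, Real.norm_of_nonneg dist_nonneg, le_inv_mul_iff₀ hδ]
  have hmin : δ * min 2 (dist p.1.point p.2.point) ≤ dist p.1 p.2 :=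
    (by gcongr; exact le_min hpδ.1 hpδ.2 : _ ≤ _).trans (min_mul_min_le_dist p.1 p.2)
  rcases min_choice 2 (dist p.1.point p.2.point) with h | h <;> rw [h] at hmin
  · linarith
  · exact hmin

theorem locallyLipschitzAt_of_isBigO {X : Type*} [PseudoMetricSpace X] {x : X}
    {f : X → ReducedCylinder U L} (hweight : LocallyLipschitzAt (fun y ↦ (f y).weight) x)
    (hheight : LocallyLipschitzAt (fun y ↦ (f y).height) x)
    (hpoint : (fun p : X × X ↦ min (L - (f p.1).height) (L - (f p.2).height) *
      min 2 (dist (f p.1).point (f p.2).point)) =O[𝓝 (x, x)] fun p ↦ dist p.1 p.2) :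
    LocallyLipschitzAt f x := by
  simp only [locallyLipschitzAt_iff_isBigO, dist_eq] at *
  exact hweight.add (hheight.add hpoint)

theorem isBigO_min_mul_min_of_isBigO_dist {ι : Type*} {l : Filter ι}
    {f g : ι → ReducedCylinder U L} {h : ι → ℝ}
    (hfg : (fun i ↦ dist (f i).point (g i).point) =O[l] h) :
    (fun i ↦ min (L - (f i).height) (L - (g i).height) *
      min 2 (dist (f i).point (g i).point)) =O[l] h := by
  refine (IsBigO.of_bound L (.of_forall fun i ↦ ?_)).trans hfg
  rw [Real.norm_of_nonneg (min_mul_min_nonneg _ _), Real.norm_of_nonneg dist_nonneg]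
  gcongr
  · exact (f i).height_mem.1.trans (f i).height_mem.2
  · exact (min_le_left _ _).trans (sub_le_self L (f i).height_mem.1)
  · exact min_le_right _ _

theorem inCyl (z : ReducedCylinder U L) : InCylInf U L z.toTriple := by
  have hpoint : z.point ∈ ⋂ j ∈ z.weight_mem.2.1.toFinset, U j :=
    mem_iInter₂.2 fun j hj ↦ z.point_mem j (by simpa using hj)
  exact ⟨z.weight_mem, z.height_mem, z.weight_mem.2.1.toFinset,
    fun j hj ↦ z.weight_mem.2.1.mem_toFinset.2 hj, ⟨_, hpoint⟩, .inr hpoint⟩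

section Reduce

variable {z w : LInf J × M × ℝ}

open Classical in
/-- A reduced representative of a point of the mapping cylinder: the apex gets an arbitrary point of
`⋂ j ∈ supp θ, U j`. -/
noncomputable def reduce (hz : InCylInf U L z) : ReducedCylinder U L where
  weight := z.1
  point := if z.2.2 = L then hz.1.2.2.2.some else z.2.1
  height := z.2.2
  weight_mem := hz.1
  point_mem j hj := by
    split_ifs with h
    · exact mem_iInter₂.1 hz.1.2.2.2.some_mem j hj
    · obtain ⟨s, hs, -, hpoint⟩ := hz.2.2
      exact mem_iInter₂.1 (hpoint.resolve_left h) j (hs j hj)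
  height_mem := hz.2.1

theorem cylDistL1_reduce (hz : InCylInf U L z) : cylDistL1 L (reduce hz).toTriple z = 0 := by
  by_cases h : z.2.2 = L <;> simp [cylDistL1, coneDistL1, toTriple, reduce, h]

theorem dist_reduce_le (hz : InCylInf U L z) (hw : InCylInf U L w) :
    dist (reduce hz) (reduce hw) ≤ 4 * cylDistInf L z w :=
  calc dist (reduce hz) (reduce hw)
    _ ≤ cylDistL1 L (reduce hz).toTriple z + cylDistL1 L z (reduce hw).toTriple :=
      cylDistL1_triangle hz.2.1.2 hz.2.1.2 hw.2.1.2
    _ ≤ cylDistL1 L (reduce hz).toTriple z +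
        (cylDistL1 L z w + cylDistL1 L w (reduce hw).toTriple) := by
      gcongr
      exact cylDistL1_triangle hz.2.1.2 hw.2.1.2 hw.2.1.2
    _ = cylDistL1 L z w := by rw [cylDistL1_comm w, cylDistL1_reduce, cylDistL1_reduce]; ring
    _ ≤ 4 * cylDistInf L z w := cylDistL1_le_four_mul_cylDistInf hz.2.1.2 hw.2.1.2

theorem cylDistInf_reduce (hz : InCylInf U L z) : cylDistInf L (reduce hz).toTriple z = 0 :=
  le_antisymm ((cylDistInf_le_cylDistL1 (z := (reduce hz).toTriple) hz.2.1.2 hz.2.1.2).trans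
    (cylDistL1_reduce hz).le) (Real.sqrt_nonneg _)

end Reduce

section Lift

variable (H : ReducedCylinder U L × unitInterval → ReducedCylinder U L)

open Classical in
/-- The map induced on all representatives by a homotopy of the reduced ones; it is extended by the
identity to the triples that do not represent a point of the mapping cylinder. -/
noncomputable def lift (p : (LInf J × M × ℝ) × unitInterval) : LInf J × M × ℝ :=
  if h : InCylInf U L p.1 then (H (reduce h, p.2)).toTriple else p.1

variable {H} {z : LInf J × M × ℝ}

theorem lift_apply (hz : InCylInf U L z) (t : unitInterval) :
    lift H (z, t) = (H (reduce hz, t)).toTriple :=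
  dif_pos hz

theorem inCyl_lift (hz : InCylInf U L z) (t : unitInterval) : InCylInf U L (lift H (z, t)) := by
  rw [lift_apply hz]
  exact inCyl _

theorem cylDistInf_lift_eq_zero (hz : InCylInf U L z) {t : unitInterval}
    (hH : H (reduce hz, t) = reduce hz) : cylDistInf L (lift H (z, t)) z = 0 := by
  rw [lift_apply hz, hH, cylDistInf_reduce]

theorem exists_cylDistInf_lift_le (hz : InCylInf U L z) {t₀ : unitInterval}
    (hH : LocallyLipschitzAt H (reduce hz, t₀)) :
    ∃ (K : ℝ≥0) (ε : ℝ), 0 < ε ∧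
      ∀ w w', InCylInf U L w → InCylInf U L w' → ∀ s s' : unitInterval,
        cylDistInf L z w < ε → cylDistInf L z w' < ε → dist t₀ s < ε → dist t₀ s' < ε →
        cylDistInf L (lift H (w, s)) (lift H (w', s')) ≤
          K * max (cylDistInf L w w') (dist s s') := by
  obtain ⟨K, S, hS, hK⟩ := hH
  obtain ⟨ε, hε, hball⟩ := Metric.mem_nhds_iff.1 hS
  have hmem {w} (hw : InCylInf U L w) {s : unitInterval} (hzw : cylDistInf L z w < ε / 4)
      (hs : dist t₀ s < ε / 4) : (reduce hw, s) ∈ S := by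
    refine hball (mem_ball'.2 (max_lt ?_ (by linarith)))
    exact (dist_reduce_le hz hw).trans_lt (by linarith)
  refine ⟨K * 4, ε / 4, by positivity, fun w w' hw hw' s s' hzw hzw' hs hs' ↦ ?_⟩
  have : 0 ≤ cylDistInf L w w' := Real.sqrt_nonneg _
  rw [lift_apply hw, lift_apply hw']
  calc cylDistInf L (H (reduce hw, s)).toTriple (H (reduce hw', s')).toTriple
    _ ≤ dist (H (reduce hw, s)) (H (reduce hw', s')) :=
      cylDistInf_le_cylDistL1 (height_mem _).2 (height_mem _).2
    _ ≤ K * max (dist (reduce hw) (reduce hw')) (dist s s') :=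
      hK.dist_le_mul _ (hmem hw hzw hs) _ (hmem hw' hzw' hs')
    _ ≤ K * max (4 * cylDistInf L w w') (4 * dist s s') := by
      gcongr
      · exact dist_reduce_le hw hw'
      · exact le_mul_of_one_le_left dist_nonneg (by norm_num)
    _ = (K * 4 : ℝ≥0) * max (cylDistInf L w w') (dist s s') := by
      rw [← mul_max_of_nonneg _ _ zero_le_four]
      push_cast
      ring

end Lift

theorem point_mem_of_mem_dominant (z : ReducedCylinder U L) {τ : Finset J}
    (hτ : z.weight ∈ dominant τ) : z.point ∈ ⋂ j ∈ τ, U j :=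
  mem_iInter₂.2 fun j hj ↦ z.point_mem j (hτ.2 j hj).1.ne'

section Amounts

variable {p : ReducedCylinder U L × unitInterval} {τ : Finset J}

/-- The amount by which the weight is pushed towards the face `τ` at time `p.2`: it grows in the
first third of the homotopy, vanishes at height `0` and is supported where `depth τ > 1 / 4`. -/
noncomputable def pruneAmount (p : ReducedCylinder U L × unitInterval) (τ : Finset J) : ℝ :=
  ramp (3 * p.2) * ramp (4 * p.1.height / L) * ramp (4 * depth τ p.1.weight - 1)

/-- The amount by which the point is contracted in `⋂ j ∈ τ, U j` at time `p.2`: it grows in the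
second third of the homotopy and is supported where `pruneAmount` equals `1`. -/
noncomputable def contractAmount (p : ReducedCylinder U L × unitInterval) (τ : Finset J) : ℝ :=
  ramp (3 * p.2 - 1) * ramp (4 * p.1.height / L - 1) * ramp (2 * depth τ p.1.weight - 1)

theorem pruneAmount_le_one : pruneAmount p τ ≤ 1 :=
  mul_le_one₀ (mul_le_one₀ (ramp_mem_Icc _).2 (ramp_mem_Icc _).1 (ramp_mem_Icc _).2)
    (ramp_mem_Icc _).1 (ramp_mem_Icc _).2

theorem depth_of_pruneAmount_ne_zero (h : pruneAmount p τ ≠ 0) : 1 / 4 < depth τ p.1.weight := by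
  linarith [pos_of_ramp_ne_zero (right_ne_zero_of_mul h)]

theorem mem_dominant_of_pruneAmount_ne_zero (h : pruneAmount p τ ≠ 0) : p.1.weight ∈ dominant τ :=
  mem_dominant_of_depth_ne_zero
    (by linarith [depth_of_pruneAmount_ne_zero h] : 0 < depth τ p.1.weight).ne'

theorem pruneAmount_eq_one (h : contractAmount p τ ≠ 0) : pruneAmount p τ = 1 := by
  have htime := pos_of_ramp_ne_zero (left_ne_zero_of_mul (left_ne_zero_of_mul h))
  have hheight := pos_of_ramp_ne_zero (right_ne_zero_of_mul (left_ne_zero_of_mul h))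
  have hdepth := pos_of_ramp_ne_zero (right_ne_zero_of_mul h)
  rw [pruneAmount, ramp_of_one_le (by linarith), ramp_of_one_le (by linarith),
    ramp_of_one_le (by linarith), one_mul, one_mul]

theorem support_contractAmount_subset :
    Function.support (contractAmount p) ⊆ Function.support (pruneAmount p) := fun _ hτ ↦
  ne_of_eq_of_ne (pruneAmount_eq_one hτ) one_ne_zero

theorem support_pruneAmount_subset :
    Function.support (pruneAmount p) ⊆ {τ | p.1.weight ∈ dominant τ} :=
  fun _ ↦ mem_dominant_of_pruneAmount_ne_zero

theorem pruneAmount_eq_zero (h : p.2 = 0 ∨ p.1.height = 0) : pruneAmount p = 0 := by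
  ext τ
  rcases h with h | h <;> simp [pruneAmount, h, ramp_of_nonpos le_rfl]

theorem contractAmount_eq_zero (h : p.2 = 0 ∨ p.1.height = 0) : contractAmount p = 0 := by
  ext τ
  by_contra hτ
  exact support_contractAmount_subset hτ (congrFun (pruneAmount_eq_zero h) τ)

theorem exists_contractAmount_eq_one (hL : 0 < L) (hheight : L / 2 ≤ p.1.height)
    (htime : 2 / 3 ≤ (p.2 : ℝ)) : ∃ τ : Finset J, τ.Nonempty ∧ contractAmount p τ = 1 := by
  obtain ⟨τ, hτ⟩ := exists_one_le_depth p.1.weight_mem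
  have hratio : 2 ≤ 4 * p.1.height / L := (le_div_iff₀ hL).2 (by linarith)
  refine ⟨τ, (mem_dominant_of_depth_ne_zero (by linarith : 0 < depth τ p.1.weight).ne').1, ?_⟩
  rw [contractAmount, ramp_of_one_le (by linarith), ramp_of_one_le (by linarith),
    ramp_of_one_le (by linarith), one_mul, one_mul]

end Amounts

/-- The retracting homotopy: prune the weight, then contract the point, then move down to height
`0`. -/
noncomputable def homotopy (C : ContractionSystem U) (p : ReducedCylinder U L × unitInterval) :
    ReducedCylinder U L where
  weight := prune (pruneAmount p) p.1.weight
  point := C.contract (contractAmount p) p.1.point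
  height := (1 - ramp (3 * p.2 - 2)) * p.1.height
  weight_mem := prune_mem_nerve p.1.weight_mem (fun _ ↦ pruneAmount_le_one)
    fun _ ↦ mem_dominant_of_pruneAmount_ne_zero
  point_mem j hj := by
    have hdamped := prune_ne_zero p.1.weight_mem hj
    have hfin := (finite_dominant p.1.weight_mem.2.1).subset (support_pruneAmount_subset (p := p))
    have hsupp := support_contractAmount_subset.trans (support_pruneAmount_subset (p := p))
    exact C.contract_mem ((isChain_dominant _).mono hsupp)
      (fun τ hτ ↦ p.1.point_mem_of_mem_dominant (hsupp hτ))
      (fun τ hτ ↦ mem_of_dampedWeight_ne_zero hfin hdamped (pruneAmount_eq_one hτ))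
      (p.1.point_mem j (support_dampedWeight_subset hdamped))
  height_mem := by
    have hramp := ramp_mem_Icc (3 * p.2 - 2)
    have hheight := p.1.height_mem
    exact ⟨mul_nonneg (by linarith [hramp.2]) hheight.1,
      (mul_le_of_le_one_left hheight.1 (by linarith [hramp.1])).trans hheight.2⟩

variable (C : ContractionSystem U)

theorem height_homotopy_of_time_le {p : ReducedCylinder U L × unitInterval}
    (hp : (p.2 : ℝ) ≤ 2 / 3) : (homotopy C p).height = p.1.height := by
  simp [homotopy, ramp_of_nonpos (by linarith : 3 * (p.2 : ℝ) - 2 ≤ 0)]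

theorem homotopy_eq_self {p : ReducedCylinder U L × unitInterval}
    (hp : p.2 = 0 ∨ p.1.height = 0) : homotopy C p = p.1 := by
  ext1
  · exact (congrArg (prune · p.1.weight) (pruneAmount_eq_zero hp)).trans (prune_zero p.1.weight_mem)
  · exact (congrArg (C.contract · p.1.point) (contractAmount_eq_zero hp)).trans C.contract_zero
  · rcases hp with hp | hp
    · exact height_homotopy_of_time_le C (by rw [hp]; norm_num)
    · simp [homotopy, hp]

theorem inDZero_homotopy_one (z : ReducedCylinder U L) :
    InDZeroInf U (homotopy C (z, 1)).toTriple := by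
  refine ⟨(homotopy C (z, 1)).weight_mem, ?_, mem_iInter₂.2 (homotopy C (z, 1)).point_mem⟩
  simp [homotopy, toTriple, ramp_of_one_le (r := 3 - 2) (by norm_num)]

section LocallyLipschitz

variable {p₀ : ReducedCylinder U L × unitInterval}

theorem locallyLipschitzAt_weight_fst (p₀ : ReducedCylinder U L × unitInterval) :
    LocallyLipschitzAt (fun p : ReducedCylinder U L × unitInterval ↦ p.1.weight) p₀ :=
  .of_lipschitzWith (lipschitzWith_weight.comp LipschitzWith.prod_fst) p₀

theorem locallyLipschitzAt_height_fst (p₀ : ReducedCylinder U L × unitInterval) :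
    LocallyLipschitzAt (fun p : ReducedCylinder U L × unitInterval ↦ p.1.height) p₀ :=
  .of_lipschitzWith (lipschitzWith_height.comp LipschitzWith.prod_fst) p₀

theorem locallyLipschitzAt_time (p₀ : ReducedCylinder U L × unitInterval) :
    LocallyLipschitzAt (fun p : ReducedCylinder U L × unitInterval ↦ (p.2 : ℝ)) p₀ :=
  .of_lipschitzWith ((LipschitzWith.subtype_val _).comp LipschitzWith.prod_snd) p₀

theorem locallyLipschitzAt_relativeHeight (p₀ : ReducedCylinder U L × unitInterval) :
    LocallyLipschitzAt (fun p : ReducedCylinder U L × unitInterval ↦ 4 * p.1.height / L) p₀ := by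
  simpa only [div_eq_inv_mul] using ((locallyLipschitzAt_height_fst p₀).const_mul 4).const_mul L⁻¹

theorem locallyLipschitzAt_depth (τ : Finset J) :
    LocallyLipschitzAt (fun p : ReducedCylinder U L × unitInterval ↦ depth τ p.1.weight) p₀ :=
  LocallyLipschitzAt.comp (f := fun p : ReducedCylinder U L × unitInterval ↦ p.1.weight)
    (.depth (norm_pos_of_mem_nerve p₀.1.weight_mem) τ) (locallyLipschitzAt_weight_fst p₀)

theorem locallyLipschitzAt_pruneAmount (τ : Finset J) :
    LocallyLipschitzAt (fun p : ReducedCylinder U L × unitInterval ↦ pruneAmount p τ) p₀ :=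
  (((locallyLipschitzAt_time p₀).const_mul 3).ramp.mul
    (locallyLipschitzAt_relativeHeight p₀).ramp).mul
    (((locallyLipschitzAt_depth τ).const_mul 4).sub (.const 1 p₀)).ramp

theorem locallyLipschitzAt_contractAmount (τ : Finset J) :
    LocallyLipschitzAt (fun p : ReducedCylinder U L × unitInterval ↦ contractAmount p τ) p₀ :=
  ((((locallyLipschitzAt_time p₀).const_mul 3).sub (.const 1 p₀)).ramp.mul
    ((locallyLipschitzAt_relativeHeight p₀).sub (.const 1 p₀)).ramp).mul
    (((locallyLipschitzAt_depth τ).const_mul 2).sub (.const 1 p₀)).ramp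

theorem locallyLipschitzAt_height_homotopy :
    LocallyLipschitzAt (fun p ↦ (homotopy C p).height) p₀ :=
  (LocallyLipschitzAt.sub (.const 1 p₀)
    (((locallyLipschitzAt_time p₀).const_mul 3).sub (.const 2 p₀)).ramp).mul
    (locallyLipschitzAt_height_fst p₀)

theorem eventually_support_pruneAmount_subset (hU : ∀ i, {j | (U i ∩ U j).Nonempty}.Finite)
    (p₀ : ReducedCylinder U L × unitInterval) :
    ∀ᶠ p in 𝓝 p₀, Function.support (pruneAmount p) ⊆ {τ | p₀.1.weight ∈ dominant τ} := by
  obtain ⟨T, hT⟩ := eventually_support_subset_of_mem_nerve hU p₀.1.weight_mem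
  have hsmall : ∀ᶠ p in 𝓝 p₀, ∀ τ ∈ T.powerset, p₀.1.weight ∉ dominant τ →
      depth τ p.1.weight < 1 / 4 := by
    refine (Finset.eventually_all _).2 fun τ _ ↦ eventually_imp_distrib_left.2 fun hτ ↦ ?_
    refine (locallyLipschitzAt_depth τ).continuousAt.eventually_lt_const ?_
    simp [not_imp_comm.1 mem_dominant_of_depth_ne_zero hτ]
  filter_upwards [(locallyLipschitzAt_weight_fst p₀).continuousAt.eventually hT, hsmall]
    with p hpT hp τ hτ
  have hτT : τ ⊆ T := fun j hj ↦
    hpT p.1.weight_mem j ((mem_dominant_of_pruneAmount_ne_zero hτ).2 j hj).1.ne'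
  by_contra hτ₀
  exact (depth_of_pruneAmount_ne_zero hτ).not_gt (hp τ (Finset.mem_powerset.2 hτT) hτ₀)

theorem eventually_point_mem (p₀ : ReducedCylinder U L × unitInterval) :
    ∀ᶠ p in 𝓝 p₀, ∀ τ ∈ {τ : Finset J | p₀.1.weight ∈ dominant τ}, p.1.point ∈ ⋂ j ∈ τ, U j := by
  refine (eventually_all_finite (finite_dominant p₀.1.weight_mem.2.1)).2 fun τ hτ ↦ ?_
  have hpos : ∀ᶠ p in 𝓝 p₀, ∀ j ∈ τ, 0 < p.1.weight j :=
    (Finset.eventually_all _).2 fun j hj ↦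
      ((lipschitzWith_one_coord j).continuous.continuousAt.comp
        (locallyLipschitzAt_weight_fst p₀).continuousAt).eventually_const_lt (hτ.2 j hj).1
  exact hpos.mono fun p hp ↦ mem_iInter₂.2 fun j hj ↦ p.1.point_mem j (hp j hj).ne'

theorem locallyLipschitzAt_weight_homotopy (hU : ∀ i, {j | (U i ∩ U j).Nonempty}.Finite)
    (p₀ : ReducedCylinder U L × unitInterval) :
    LocallyLipschitzAt (fun p ↦ (homotopy C p).weight) p₀ := by
  obtain ⟨T, hT⟩ := eventually_support_subset_of_mem_nerve hU p₀.1.weight_mem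
  refine LocallyLipschitzAt.normalizedWeight (T := T) ?_ (fun j ↦ ?_) ?_
  · filter_upwards [(locallyLipschitzAt_weight_fst p₀).continuousAt.eventually hT] with p hp j hj
    exact hp p.1.weight_mem j (support_dampedWeight_subset hj)
  · refine LocallyLipschitzAt.dampedWeight (S := (finite_dominant p₀.1.weight_mem.2.1).toFinset)
      ?_ locallyLipschitzAt_pruneAmount (locallyLipschitzAt_weight_fst p₀) j
    simpa only [Finite.coe_toFinset] using eventually_support_pruneAmount_subset hU p₀
  · exact (finsum_dampedWeight_pos p₀.1.weight_mem (fun _ ↦ pruneAmount_le_one)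
      fun _ ↦ mem_dominant_of_pruneAmount_ne_zero).ne'

theorem eventually_support_contractAmount_subset (hU : ∀ i, {j | (U i ∩ U j).Nonempty}.Finite)
    (p₀ : ReducedCylinder U L × unitInterval) :
    ∀ᶠ p in 𝓝 p₀, Function.support (contractAmount p) ⊆ {τ | p₀.1.weight ∈ dominant τ} :=
  (eventually_support_pruneAmount_subset hU p₀).mono fun _ ↦ support_contractAmount_subset.trans

theorem isBigO_dist_point_homotopy (hU : ∀ i, {j | (U i ∩ U j).Nonempty}.Finite)
    (p₀ : ReducedCylinder U L × unitInterval) :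
    (fun p : (ReducedCylinder U L × unitInterval) × (ReducedCylinder U L × unitInterval) ↦
      dist (homotopy C p.1).point (homotopy C p.2).point) =O[𝓝 (p₀, p₀)]
      fun p ↦ dist p.1.1.point p.2.1.point + dist p.1 p.2 :=
  C.isBigO_dist_contract (isChain_dominant p₀.1.weight) (finite_dominant p₀.1.weight_mem.2.1)
    locallyLipschitzAt_contractAmount (eventually_support_contractAmount_subset hU p₀)
    (eventually_point_mem p₀)

theorem locallyLipschitzAt_homotopy_of_height_lt (hU : ∀ i, {j | (U i ∩ U j).Nonempty}.Finite)
    (hp₀ : p₀.1.height < L) : LocallyLipschitzAt (homotopy C) p₀ := by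
  have hpoint : LocallyLipschitzAt
      (fun p : ReducedCylinder U L × unitInterval ↦ p.1.point) p₀ :=
    (locallyLipschitzAt_point hp₀).comp (.of_lipschitzWith LipschitzWith.prod_fst p₀)
  exact locallyLipschitzAt_of_isBigO (locallyLipschitzAt_weight_homotopy C hU p₀)
    (locallyLipschitzAt_height_homotopy C) <| isBigO_min_mul_min_of_isBigO_dist <|
    (isBigO_dist_point_homotopy C hU p₀).trans <|
      (locallyLipschitzAt_iff_isBigO.1 hpoint).add (isBigO_refl _ _)

theorem isBigO_min_mul_min_of_height_eq (hU : ∀ i, {j | (U i ∩ U j).Nonempty}.Finite)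
    {l : Filter ((ReducedCylinder U L × unitInterval) × (ReducedCylinder U L × unitInterval))}
    (hl : l ≤ 𝓝 (p₀, p₀)) (hheight : ∀ᶠ p in l, (homotopy C p.1).height = p.1.1.height ∧
      (homotopy C p.2).height = p.2.1.height) :
    (fun p ↦ min (L - (homotopy C p.1).height) (L - (homotopy C p.2).height) *
      min 2 (dist (homotopy C p.1).point (homotopy C p.2).point)) =O[l]
      fun p ↦ dist p.1 p.2 := by
  obtain ⟨K, hK⟩ := ((isBigO_dist_point_homotopy C hU p₀).mono hl).bound
  refine IsBigO.of_bound (max K 1 * (1 + L)) ?_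
  filter_upwards [hK, hheight] with p hp ⟨h₁, h₂⟩
  rw [Real.norm_of_nonneg (by positivity), Real.norm_of_nonneg (by positivity)] at hp
  rw [Real.norm_of_nonneg (min_mul_min_nonneg _ _), Real.norm_of_nonneg dist_nonneg, h₁, h₂]
  set m := min (L - p.1.1.height) (L - p.2.1.height)
  have hm : 0 ≤ m := le_min (sub_nonneg.2 p.1.1.height_mem.2) (sub_nonneg.2 p.2.1.height_mem.2)
  have hmL : m ≤ L := (min_le_left _ _).trans (sub_le_self L p.1.1.height_mem.1)
  have hbase : m * min 2 (dist p.1.1.point p.2.1.point) ≤ dist p.1 p.2 :=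
    (min_mul_min_le_dist p.1.1 p.2.1).trans (le_max_left _ _)
  calc m * min 2 (dist (homotopy C p.1).point (homotopy C p.2).point)
    _ ≤ m * (max K 1 * (min 2 (dist p.1.1.point p.2.1.point) + dist p.1 p.2)) := by
      gcongr
      exact min_two_le_max_mul dist_nonneg dist_nonneg hp
    _ = max K 1 * (m * min 2 (dist p.1.1.point p.2.1.point) + m * dist p.1 p.2) := by ring
    _ ≤ max K 1 * (dist p.1 p.2 + L * dist p.1 p.2) := by gcongr
    _ = max K 1 * (1 + L) * dist p.1 p.2 := by ring

-- Near the apex the contraction is finished before the height changes. So of two nearby points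
-- either one is completely contracted, and the distance of the original points is irrelevant, or
-- both heights are unchanged, and the cone metric absorbs that distance.
theorem locallyLipschitzAt_homotopy_of_height_eq (hU : ∀ i, {j | (U i ∩ U j).Nonempty}.Finite)
    (hL : 0 < L) (hp₀ : p₀.1.height = L) : LocallyLipschitzAt (homotopy C) p₀ := by
  have hhigh : ∀ᶠ p in 𝓝 p₀, L / 2 ≤ p.1.height :=
    ((locallyLipschitzAt_height_fst p₀).continuousAt.eventually_const_lt
      (by linarith : L / 2 < p₀.1.height)).mono fun _ ↦ le_of_lt
  set S := {p : (ReducedCylinder U L × unitInterval) × (ReducedCylinder U L × unitInterval) |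
    ∃ τ : Finset J, τ.Nonempty ∧ (contractAmount p.1 τ = 1 ∨ contractAmount p.2 τ = 1)}
  have hheight : ∀ᶠ p in 𝓝 (p₀, p₀) ⊓ 𝓟 Sᶜ, (homotopy C p.1).height = p.1.1.height ∧
      (homotopy C p.2).height = p.2.1.height := by
    rw [eventually_inf_principal, nhds_prod_eq]
    filter_upwards [hhigh.prod_mk hhigh] with p hp hpS
    have heq (q : ReducedCylinder U L × unitInterval) (hq : L / 2 ≤ q.1.height)
        (hqS : ∀ τ : Finset J, τ.Nonempty → contractAmount q τ ≠ 1) :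
        (homotopy C q).height = q.1.height := by
      refine height_homotopy_of_time_le C (le_of_not_gt fun htime ↦ ?_)
      obtain ⟨τ, hτ, hqτ⟩ := exists_contractAmount_eq_one hL hq htime.le
      exact hqS τ hτ hqτ
    exact ⟨heq p.1 hp.1 fun τ hτ h ↦ hpS ⟨τ, hτ, .inl h⟩,
      heq p.2 hp.2 fun τ hτ h ↦ hpS ⟨τ, hτ, .inr h⟩⟩
  have hcontracted := C.isBigO_dist_contract_of_eq_one (isChain_dominant p₀.1.weight)
    (finite_dominant p₀.1.weight_mem.2.1) locallyLipschitzAt_contractAmount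
    (eventually_support_contractAmount_subset hU p₀) (eventually_point_mem p₀)
  refine locallyLipschitzAt_of_isBigO (locallyLipschitzAt_weight_homotopy C hU p₀)
    (locallyLipschitzAt_height_homotopy C) ?_
  have hsup := (isBigO_min_mul_min_of_isBigO_dist hcontracted).sup
    (isBigO_min_mul_min_of_height_eq C hU inf_le_left hheight)
  rwa [← inf_sup_left, sup_principal, union_compl_self, principal_univ, inf_top_eq] at hsup

theorem locallyLipschitzAt_homotopy (hU : ∀ i, {j | (U i ∩ U j).Nonempty}.Finite) (hL : 0 < L)
    (p₀ : ReducedCylinder U L × unitInterval) : LocallyLipschitzAt (homotopy C) p₀ :=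
  p₀.1.height_mem.2.lt_or_eq.elim (locallyLipschitzAt_homotopy_of_height_lt C hU)
    (locallyLipschitzAt_homotopy_of_height_eq C hU hL)

end LocallyLipschitz

end ReducedCylinder

open ReducedCylinder in
theorem cylinder_locLipSDR_onto_DZero_general {M : Type*} [MetricSpace M] {J : Type*}
    (U : J → Set M) (hfin : ∀ i, {j | (U i ∩ U j).Nonempty}.Finite)
    (hcontr : ∀ s : Finset J, s.Nonempty → (⋂ j ∈ s, U j).Nonempty →
      IsLipContractible (⋂ j ∈ s, U j)) (L : ℝ) (hL : 0 < L) :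
    ∃ Φ : ((lp (fun _ : J => ℝ) ⊤) × M × ℝ) × unitInterval →
        (lp (fun _ : J => ℝ) ⊤) × M × ℝ,
      (∀ z, InCylInf U L z → ∀ t : unitInterval, InCylInf U L (Φ (z, t))) ∧
      (∀ z, InCylInf U L z → ∀ t₀ : unitInterval, ∃ (K : NNReal) (ε : ℝ), 0 < ε ∧
        ∀ w w', InCylInf U L w → InCylInf U L w' → ∀ s s' : unitInterval,
          cylDistInf L z w < ε → cylDistInf L z w' < ε →
          dist t₀ s < ε → dist t₀ s' < ε →
          cylDistInf L (Φ (w, s)) (Φ (w', s')) ≤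
            K * max (cylDistInf L w w') (dist s s')) ∧
      (∀ z, InCylInf U L z → cylDistInf L (Φ (z, 0)) z = 0) ∧
      (∀ z, InCylInf U L z → InDZeroInf U (Φ (z, 1))) ∧
      (∀ z, InCylInf U L z → InDZeroInf U z →
        ∀ t : unitInterval, cylDistInf L (Φ (z, t)) z = 0) := by
  obtain ⟨C⟩ := ContractionSystem.nonempty_of_isLipContractible hcontr
  refine ⟨lift (homotopy C), fun z hz t ↦ inCyl_lift hz t, fun z hz t₀ ↦ ?_, fun z hz ↦ ?_,
    fun z hz ↦ ?_, fun z hz hz₀ t ↦ ?_⟩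
  · exact exists_cylDistInf_lift_le hz (locallyLipschitzAt_homotopy C hfin hL _)
  · exact cylDistInf_lift_eq_zero hz (homotopy_eq_self C (.inl rfl))
  · rw [lift_apply hz]
    exact inDZero_homotopy_one C _
  · exact cylDistInf_lift_eq_zero hz (homotopy_eq_self C (.inr hz₀.2.1))

end

/-- For a σ-compact metric space with a good covering (countable index
set) and `L > 6`, there is a *locally Lipschitz* strong deformation retraction `Φ` of the
mapping cylinder `M(p)` onto `D(𝒰) × {0}`.  Everything is expressed on representatives,
with equality in `M(p)` expressed as vanishing of `cylDistInf`; local Lipschitz continuity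
means: around every point of `M(p) × [0,1]` there is a ball on which `Φ` satisfies a
Lipschitz estimate. -/
theorem cylinder_locLipSDR_onto_DZero {M : Type*} [MetricSpace M] [SigmaCompactSpace M]
    {J : Type*} [Countable J] (U : J → Set M) (hU : IsGoodCovering U)
    (L : ℝ) (hL : 6 < L) :
    ∃ Φ : ((lp (fun _ : J => ℝ) ⊤) × M × ℝ) × unitInterval →
        (lp (fun _ : J => ℝ) ⊤) × M × ℝ,
      (∀ z, InCylInf U L z → ∀ t : unitInterval, InCylInf U L (Φ (z, t))) ∧
      (∀ z, InCylInf U L z → ∀ t₀ : unitInterval, ∃ (K : NNReal) (ε : ℝ), 0 < ε ∧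
        ∀ w w', InCylInf U L w → InCylInf U L w' → ∀ s s' : unitInterval,
          cylDistInf L z w < ε → cylDistInf L z w' < ε →
          dist t₀ s < ε → dist t₀ s' < ε →
          cylDistInf L (Φ (w, s)) (Φ (w', s')) ≤
            K * max (cylDistInf L w w') (dist s s')) ∧
      (∀ z, InCylInf U L z → cylDistInf L (Φ (z, 0)) z = 0) ∧
      (∀ z, InCylInf U L z → InDZeroInf U (Φ (z, 1))) ∧
      (∀ z, InCylInf U L z → InDZeroInf U z →
        ∀ t : unitInterval, cylDistInf L (Φ (z, t)) z = 0) := by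
  refine cylinder_locLipSDR_onto_DZero_general U (fun i ↦ ?_)
    (fun s hs hne ↦ (hU.2.2.2.2 s hs hne).isLipContractible) L (by linarith)
  exact (hU.2.2.1.finite_nonempty_inter_compact (hU.2.2.2.1 i)).subset fun j ↦
    fun ⟨x, hxi, hxj⟩ ↦ ⟨x, hxj, subset_closure hxi⟩
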